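/- arXiv:1603.07056 — 7 statements merged into one kernel-verified Lean document; each statement's English description precedes it below -/
import Mathlib

section
/- For every graph G with n vertices, clique number ω(G) and Hadwiger number h(G), one has h(G) ≤ ⌊(n + ω(G))/2⌋. -/
/-- `H` is a minor of `G`: there are disjoint nonempty connected branch sets in `G`,
one for each vertex of `H`, with an edge of `G` between the branch sets of any two
vertices adjacent in `H`. -/
def SimpleGraph.IsMinor {W V : Type*} (H : SimpleGraph W) (G : SimpleGraph V) : Prop :=
  ∃ f : W → Set V,
    (∀ w, (f w).Nonempty) ∧
    (∀ w, (G.induce (f w)).Connected) ∧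
    (Pairwise fun w₁ w₂ => Disjoint (f w₁) (f w₂)) ∧
    ∀ ⦃w₁ w₂⦄, H.Adj w₁ w₂ → ∃ v₁ ∈ f w₁, ∃ v₂ ∈ f w₂, G.Adj v₁ v₂

/-- The number of cliques (vertex subsets inducing complete subgraphs, including `∅`). -/
noncomputable def SimpleGraph.cliqueCount {V : Type*} [Fintype V] (G : SimpleGraph V) : ℕ :=
  Nat.card {s : Finset V // G.IsClique (s : Set V)}

/-- The number of cliques containing a given vertex. -/
noncomputable def SimpleGraph.cliqueCountOn {V : Type*} [Fintype V] (G : SimpleGraph V)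
    (v : V) : ℕ :=
  Nat.card {s : Finset V // G.IsClique (s : Set V) ∧ v ∈ s}

/-- The Hadwiger number: the largest `t` such that `K_t` is a minor of `G`. -/
noncomputable def SimpleGraph.hadwigerNumber {V : Type*} [Fintype V] (G : SimpleGraph V) : ℕ :=
  sSup {t | (completeGraph (Fin t)).IsMinor G}

/-- The matching number: the maximum number of edges of a matching in `G`. -/
noncomputable def SimpleGraph.matchingNumber {V : Type*} [Fintype V] (G : SimpleGraph V) : ℕ :=
  sSup {k | ∃ M : G.Subgraph, M.IsMatching ∧ M.edgeSet.ncard = k}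

/-!
The branch sets of a `K_t` minor that consist of a single vertex form a clique, so at most `ω` of
them are singletons. All the others have at least two vertices each, and disjointness gives
`2 * t ≤ n + ω`.
-/

section

open Finset

theorem two_mul_card_le_card_biUnion_add_card_filter_card_eq_one {ι α : Type*} [DecidableEq α]
    {s : Finset ι} {f : ι → Finset α} (hne : ∀ i ∈ s, (f i).Nonempty)
    (hdisj : (s : Set ι).PairwiseDisjoint f) :
    2 * #s ≤ #(s.biUnion f) + #{i ∈ s | #(f i) = 1} := by
  have two_le (i : ι) (hi : i ∈ s) : 2 ≤ #(f i) + if #(f i) = 1 then 1 else 0 := by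
    have := (hne i hi).card_pos
    split_ifs <;> omega
  calc
    2 * #s = ∑ _i ∈ s, 2 := by rw [sum_const, smul_eq_mul, mul_comm]
    _ ≤ ∑ i ∈ s, (#(f i) + if #(f i) = 1 then 1 else 0) := sum_le_sum two_le
    _ = #(s.biUnion f) + #{i ∈ s | #(f i) = 1} := by
      rw [sum_add_distrib, card_biUnion hdisj, card_filter]

variable {V W : Type*} {G : SimpleGraph V}

theorem card_le_cliqueNum_of_pairwise_adj [Finite V] {s : Finset W} {x : W → V}
    (hadj : (s : Set W).Pairwise fun a b => G.Adj (x a) (x b)) : #s ≤ G.cliqueNum := by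
  classical
  have x_injOn : Set.InjOn x s := fun a ha b hb hab =>
    by_contra fun hne => (hadj ha hb hne).ne hab
  have image_isClique : G.IsClique (s.image x : Set V) := by
    rw [coe_image]
    exact Set.Pairwise.image hadj
  rw [← card_image_of_injOn x_injOn]
  exact image_isClique.card_le_cliqueNum

theorem card_filter_card_eq_one_le_cliqueNum [Finite V] {s : Finset W} {f : W → Finset V}
    (hadj : (s : Set W).Pairwise fun a b => ∃ u ∈ f a, ∃ v ∈ f b, G.Adj u v) :
    #{w ∈ s | #(f w) = 1} ≤ G.cliqueNum := by
  have exists_vertex (w : {w ∈ s | #(f w) = 1}) : ∃ v, f w = {v} :=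
    card_eq_one.mp (mem_filter.mp w.2).2
  choose x hx using exists_vertex
  rw [← card_attach]
  refine card_le_cliqueNum_of_pairwise_adj (x := x) fun a _ b _ hab => ?_
  obtain ⟨u, hu, v, hv, huv⟩ := hadj (mem_filter.mp a.2).1 (mem_filter.mp b.2).1
    (Subtype.coe_ne_coe.mpr hab)
  rw [hx, mem_singleton] at hu hv
  rwa [hu, hv] at huv

theorem two_mul_card_le_of_completeGraph_isMinor [Fintype V] [Fintype W]
    (h : (SimpleGraph.completeGraph W).IsMinor G) :
    2 * Fintype.card W ≤ Fintype.card V + G.cliqueNum := by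
  classical
  obtain ⟨f, hne, -, hdisj, hadj⟩ := h
  let B (w : W) : Finset V := (f w).toFinset
  have B_nonempty (w : W) : (B w).Nonempty := Set.toFinset_nonempty.mpr (hne w)
  have B_disjoint : Pairwise (Function.onFun Disjoint B) := fun _ _ hab =>
    Set.disjoint_toFinset.mpr (hdisj hab)
  have B_adj : Pairwise fun a b => ∃ u ∈ B a, ∃ v ∈ B b, G.Adj u v := fun _ _ hab => by
    simpa only [B, Set.mem_toFinset] using hadj hab
  calc
    2 * Fintype.card W ≤ #(univ.biUnion B) + #{w | #(B w) = 1} :=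
      two_mul_card_le_card_biUnion_add_card_filter_card_eq_one (fun w _ => B_nonempty w)
        (B_disjoint.set_pairwise _)
    _ ≤ Fintype.card V + G.cliqueNum :=
      add_le_add (card_le_univ _) (card_filter_card_eq_one_le_cliqueNum (B_adj.set_pairwise _))

end

/-- The Hadwiger number of a graph is at most `⌊(n + ω)/2⌋`. -/
theorem hadwigerNumber_le {V : Type*} [Fintype V] (G : SimpleGraph V) :
    G.hadwigerNumber ≤ (Fintype.card V + G.cliqueNum) / 2 := by
  refine csSup_le' fun t ht => ?_
  rw [Nat.le_div_iff_mul_le two_pos, mul_comm]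
  simpa only [Fintype.card_fin] using two_mul_card_le_of_completeGraph_isMinor ht
end

section
/- Let G be a graph on n vertices with minimum degree δ and clique number ω, and set Δ = n − δ − 1 (the maximum degree of the complement of G). If n ≥ ω + 2Δ² + 2, then the Hadwiger number of G equals ⌊(n + ω)/2⌋. -/
/-!
In a minor model of `K_t` the singleton branch sets form a clique, so at most `ω` of them are
singletons and the others use at least two vertices each; hence `2t ≤ n + ω`.

Conversely, let `K` be a maximum clique. Contracting an edge `uv` such that every other vertex is
adjacent to `u` or `v` gives a vertex adjacent to all others, so `K` together with a matching of
such edges outside `K` is a complete minor. If `uv` is not such an edge, then `v` is at distance at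
most two from `u` in the complement of `G`, which happens for at most `Δ²` vertices `v`. The graph
of these edges is therefore so dense outside `K` that, by an Ore-type argument, it has a matching
there missing at most one vertex: if a maximum matching misses `u` and `v`, no edge `xy` of it has
`x` adjacent to `u` and `y` adjacent to `v`, so `deg u + deg v` is at most the number of matched
vertices.
-/

open Finset SimpleGraph

section Matching

variable {V : Type*} {G : SimpleGraph V} {M : G.Subgraph} {u v x y : V}

theorem isMatching_deleteVerts_pair (hM : M.IsMatching) (hxy : M.Adj x y) :
    (M.deleteVerts {x, y}).IsMatching := by
  rintro a ⟨ha, ha_notMem⟩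
  obtain ⟨b, hab, hb_unique⟩ := hM ha
  refine ⟨b, ?_, fun c hc => hb_unique c (Subgraph.deleteVerts_adj.1 hc).2.2.2.2⟩
  have hb_notMem : b ∉ ({x, y} : Set V) := by
    rintro (rfl | rfl)
    · exact ha_notMem (.inr (hM.eq_of_adj_right hab hxy.symm))
    · exact ha_notMem (.inl (hM.eq_of_adj_right hab hxy))
  exact Subgraph.deleteVerts_adj.2 ⟨ha, ha_notMem, hab.snd_mem, hb_notMem, hab⟩

theorem exists_isMatching_verts_eq_insert_insert_of_adj (hM : M.IsMatching) (huv : G.Adj u v)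
    (hu : u ∉ M.verts) (hv : v ∉ M.verts) :
    ∃ M' : G.Subgraph, M'.IsMatching ∧ M'.verts = insert u (insert v M.verts) := by
  refine ⟨M ⊔ G.subgraphOfAdj huv, hM.sup (.subgraphOfAdj huv) ?_, ?_⟩
  · rw [hM.support_eq_verts, (Subgraph.IsMatching.subgraphOfAdj huv).support_eq_verts]
    simp [hu, hv]
  · ext a
    simp

theorem exists_isMatching_verts_eq_insert_insert_of_alternating (hM : M.IsMatching)
    (hux : G.Adj u x) (hxy : M.Adj x y) (hyv : G.Adj y v)
    (hu : u ∉ M.verts) (hv : v ∉ M.verts) (huv : u ≠ v) :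
    ∃ M' : G.Subgraph, M'.IsMatching ∧ M'.verts = insert u (insert v M.verts) := by
  have hx : x ∈ M.verts := hxy.fst_mem
  have hy : y ∈ M.verts := hxy.snd_mem
  obtain ⟨M₁, hM₁, hverts₁⟩ :=
    exists_isMatching_verts_eq_insert_insert_of_adj (isMatching_deleteVerts_pair hM hxy) hux
      (by simp [hu]) (by simp)
  obtain ⟨M₂, hM₂, hverts₂⟩ := exists_isMatching_verts_eq_insert_insert_of_adj hM₁ hyv
    (by grind [Subgraph.deleteVerts_verts, hxy.ne]) (by grind [Subgraph.deleteVerts_verts])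
  refine ⟨M₂, hM₂, ?_⟩
  rw [hverts₂, hverts₁, Subgraph.deleteVerts_verts]
  grind

theorem mem_verts_of_maximalFor_of_adj (hM : MaximalFor Subgraph.IsMatching Subgraph.verts M)
    (hu : u ∉ M.verts) (huv : G.Adj u v) : v ∈ M.verts := by
  by_contra hv
  obtain ⟨M', hM', hverts⟩ := exists_isMatching_verts_eq_insert_insert_of_adj hM.1 huv hu hv
  exact hu (hM.2 hM' (hverts ▸ by grind) (hverts ▸ Set.mem_insert u _))

theorem not_adj_of_maximalFor_of_adj (hM : MaximalFor Subgraph.IsMatching Subgraph.verts M)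
    (hu : u ∉ M.verts) (hv : v ∉ M.verts) (huv : u ≠ v) (hux : G.Adj u x) (hxy : M.Adj x y) :
    ¬G.Adj v y := by
  intro hvy
  obtain ⟨M', hM', hverts⟩ := exists_isMatching_verts_eq_insert_insert_of_alternating hM.1 hux hxy
    hvy.symm hu hv huv
  exact hu (hM.2 hM' (hverts ▸ by grind) (hverts ▸ Set.mem_insert u _))

theorem degree_add_degree_le_ncard_verts_of_maximalFor [Fintype V] [DecidableRel G.Adj]
    (hM : MaximalFor Subgraph.IsMatching Subgraph.verts M)
    (hu : u ∉ M.verts) (hv : v ∉ M.verts) (huv : u ≠ v) :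
    G.degree u + G.degree v ≤ M.verts.ncard := by
  classical
  have : Nonempty V := ⟨u⟩
  have exists_partner (x : V) (hx : x ∈ M.verts) : ∃ y, M.Adj x y := (hM.1 hx).exists
  choose! partner adj_partner using exists_partner
  have adj_partner_of_adj {x : V} (hux : G.Adj u x) : M.Adj x (partner x) :=
    adj_partner x (mem_verts_of_maximalFor_of_adj hM hu hux)
  have partner_injOn : Set.InjOn partner (G.neighborFinset u) := fun x hx y hy hxy =>
    hM.1.eq_of_adj_right (adj_partner_of_adj (by simpa using hx))
      (hxy ▸ adj_partner_of_adj (by simpa using hy))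
  have disjoint_partners : Disjoint ((G.neighborFinset u).image partner) (G.neighborFinset v) := by
    simp only [Finset.disjoint_left, forall_mem_image, mem_neighborFinset]
    exact fun x hux => not_adj_of_maximalFor_of_adj hM hu hv huv hux (adj_partner_of_adj hux)
  rw [← card_neighborFinset_eq_degree, ← card_neighborFinset_eq_degree,
    ← card_image_of_injOn partner_injOn, ← card_union_of_disjoint disjoint_partners,
    ← Set.ncard_coe_finset]
  refine Set.ncard_le_ncard fun a ha => ?_
  simp only [coe_union, coe_image, coe_neighborFinset, Set.mem_union, Set.mem_image] at ha
  obtain ⟨x, hux, rfl⟩ | hva := ha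
  · exact (adj_partner_of_adj hux).snd_mem
  · exact mem_verts_of_maximalFor_of_adj hM hv hva

theorem exists_isMatching_card_le_of_card_le_degree_add_degree [Fintype V] [DecidableRel G.Adj]
    (h : ∀ u v, u ≠ v → ¬G.Adj u v → Fintype.card V ≤ G.degree u + G.degree v + 1) :
    ∃ M : G.Subgraph, M.IsMatching ∧ Fintype.card V ≤ M.verts.ncard + 1 := by
  obtain ⟨M, hM⟩ := (Set.toFinite {M : G.Subgraph | M.IsMatching}).exists_maximalFor
    Subgraph.verts _ ⟨⊥, by simp [Subgraph.IsMatching]⟩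
  refine ⟨M, hM.1, ?_⟩
  by_contra! hcard
  have hunmatched : 1 < M.vertsᶜ.ncard := by
    rw [Set.ncard_compl, Nat.card_eq_fintype_card]
    omega
  obtain ⟨u, hu, v, hv, huv⟩ := (Set.one_lt_ncard (Set.toFinite _)).1 hunmatched
  have hnadj : ¬G.Adj u v := fun hadj => hv (mem_verts_of_maximalFor_of_adj hM hu hadj)
  have := degree_add_degree_le_ncard_verts_of_maximalFor hM hu hv huv
  have := h u v huv hnadj
  omega

theorem ncard_le_degree_induce_add_maxDegree_compl [Fintype V] [DecidableEq V] [DecidableRel G.Adj]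
    (s : Set V) [DecidablePred (· ∈ s)] (v : s) :
    s.ncard ≤ (G.induce s).degree v + Gᶜ.maxDegree + 1 := by
  have hcontained : (G.induce s)ᶜ ⊑ Gᶜ :=
    ⟨⟨⟨Subtype.val, fun h => ⟨Subtype.coe_ne_coe.2 h.1, h.2⟩⟩, Subtype.val_injective⟩⟩
  have hdegree := ((G.induce s)ᶜ.degree_le_maxDegree v).trans hcontained.maxDegree_mono
  rw [degree_compl, ← Nat.card_eq_fintype_card, Nat.card_coe_set_eq] at hdegree
  omega

theorem exists_isMatching_verts_subset_of_two_mul_maxDegree_compl_lt [Fintype V] [DecidableEq V]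
    [DecidableRel G.Adj] (s : Set V) (h : 2 * Gᶜ.maxDegree < s.ncard) :
    ∃ M : G.Subgraph, M.IsMatching ∧ M.verts ⊆ s ∧ s.ncard ≤ M.verts.ncard + 1 := by
  classical
  have hcard : Fintype.card s = s.ncard := by
    rw [← Nat.card_eq_fintype_card, Nat.card_coe_set_eq]
  have hdegree (u v : s) :
      Fintype.card s ≤ (G.induce s).degree u + (G.induce s).degree v + 1 := by
    have := ncard_le_degree_induce_add_maxDegree_compl (G := G) s u
    have := ncard_le_degree_induce_add_maxDegree_compl (G := G) s v
    omega
  obtain ⟨M, hM, hcardM⟩ :=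
    exists_isMatching_card_le_of_card_le_degree_add_degree fun u v _ _ => hdegree u v
  refine ⟨M.map (Embedding.induce _).toHom, hM.map _ Subtype.val_injective, ?_, ?_⟩
  · rintro _ ⟨v, -, rfl⟩
    exact v.2
  · rw [Subgraph.map_verts, Set.ncard_image_of_injective M.verts (f := (Embedding.induce s).toHom)
      Subtype.val_injective, ← hcard]
    exact hcardM

theorem ncard_verts_le_two_mul_ncard_edgeSet [Finite M.edgeSet] (hM : M.IsMatching) :
    M.verts.ncard ≤ 2 * M.edgeSet.ncard := by
  have ncard_edge_le (e : Sym2 V) : (e : Set V).ncard ≤ 2 := by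
    induction e with | _ a b => simpa using Set.ncard_insert_le a {b}
  have := Fintype.ofFinite M.edgeSet
  calc
    M.verts.ncard = (⋃ e : M.edgeSet, ((e : Sym2 V) : Set V)).ncard := by
      rw [hM.verts_eq_biUnion_edgeSet, Set.biUnion_eq_iUnion]
    _ ≤ ∑ e : M.edgeSet, ((e : Sym2 V) : Set V).ncard := Set.ncard_iUnion_le_of_fintype _
    _ ≤ ∑ _e : M.edgeSet, 2 := sum_le_sum fun e _ => ncard_edge_le e
    _ = 2 * M.edgeSet.ncard := by
      rw [sum_const, card_univ, ← Nat.card_eq_fintype_card, Nat.card_coe_set_eq, smul_eq_mul,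
        mul_comm]

theorem disjoint_of_mem_edgeSet_of_ne (hM : M.IsMatching) {e e' : Sym2 V} (he : e ∈ M.edgeSet)
    (he' : e' ∈ M.edgeSet) (hne : e ≠ e') : Disjoint (e : Set V) e' := by
  refine Set.disjoint_left.2 ?_
  rintro v ⟨w, rfl⟩ ⟨w', rfl⟩
  exact hne (congrArg (s(v, ·)) (hM.eq_of_adj_left he he'))

end Matching

section DominatingEdge

variable {V : Type*} {G : SimpleGraph V}

/-- The spanning subgraph of `G` formed by its dominating edges, those `uv` for which every other
vertex is adjacent to `u` or to `v`: contracting such an edge gives a vertex adjacent to all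
others. -/
def dominatingEdgeGraph (G : SimpleGraph V) : SimpleGraph V where
  Adj u v := G.Adj u v ∧ ∀ w, w ≠ u → w ≠ v → G.Adj u w ∨ G.Adj v w
  symm := ⟨fun _ _ h => ⟨h.1.symm, fun w hv hu => (h.2 w hu hv).symm⟩⟩
  loopless := ⟨fun _ h => h.1.ne rfl⟩

theorem exists_adj_of_notMem_of_mem_edgeSet_dominatingEdgeGraph {e : Sym2 V}
    (he : e ∈ (dominatingEdgeGraph G).edgeSet) {w : V} (hw : w ∉ e) : ∃ v ∈ e, G.Adj v w := by
  induction e with | _ a b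
  rw [Sym2.mem_iff, not_or] at hw
  obtain haw | hbw := he.2 w hw.1 hw.2
  · exact ⟨a, Sym2.mem_mk_left a b, haw⟩
  · exact ⟨b, Sym2.mem_mk_right a b, hbw⟩

theorem exists_compl_adj_of_compl_dominatingEdgeGraph_adj {u v : V}
    (huv : (dominatingEdgeGraph G)ᶜ.Adj u v) :
    ∃ w, Gᶜ.Adj u w ∧ (v = w ∨ Gᶜ.Adj w v) := by
  obtain ⟨hne, hnot⟩ := huv
  by_cases hadj : G.Adj u v
  · obtain ⟨w, hwu, hwv, hnuw, hnvw⟩ : ∃ w, w ≠ u ∧ w ≠ v ∧ ¬G.Adj u w ∧ ¬G.Adj v w := by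
      simpa [dominatingEdgeGraph, hadj] using hnot
    exact ⟨w, ⟨hwu.symm, hnuw⟩, .inr ⟨hwv, fun h => hnvw h.symm⟩⟩
  · exact ⟨v, ⟨hne, hadj⟩, .inl rfl⟩

theorem maxDegree_compl_dominatingEdgeGraph_le [Fintype V] [DecidableEq V] [DecidableRel G.Adj]
    [DecidableRel (dominatingEdgeGraph G).Adj] :
    (dominatingEdgeGraph G)ᶜ.maxDegree ≤ Gᶜ.maxDegree ^ 2 := by
  refine maxDegree_le_of_forall_degree_le _ _ fun u => ?_
  let closedNbrs (w : V) : Finset V := insert w ((Gᶜ.neighborFinset w).erase u)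
  have hsubset : (dominatingEdgeGraph G)ᶜ.neighborFinset u ⊆
      (Gᶜ.neighborFinset u).biUnion closedNbrs := fun v hv => by
    rw [mem_neighborFinset] at hv
    obtain ⟨w, huw, hwv⟩ := exists_compl_adj_of_compl_dominatingEdgeGraph_adj hv
    simp only [closedNbrs, mem_biUnion, mem_insert, mem_erase, mem_neighborFinset]
    exact ⟨w, huw, hwv.imp_right fun hwv => ⟨hv.ne', hwv⟩⟩
  have hcard (w : V) (hw : w ∈ Gᶜ.neighborFinset u) : #(closedNbrs w) ≤ Gᶜ.maxDegree := by
    have hu : u ∈ Gᶜ.neighborFinset w := by simpa [Gᶜ.adj_comm] using hw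
    calc
      #(closedNbrs w) ≤ #((Gᶜ.neighborFinset w).erase u) + 1 := card_insert_le _ _
      _ = Gᶜ.degree w := card_erase_add_one hu
      _ ≤ Gᶜ.maxDegree := degree_le_maxDegree _ w
  calc
    (dominatingEdgeGraph G)ᶜ.degree u ≤ #((Gᶜ.neighborFinset u).biUnion closedNbrs) :=
      card_le_card hsubset
    _ ≤ Gᶜ.degree u * Gᶜ.maxDegree := card_biUnion_le_card_mul _ _ _ hcard
    _ ≤ Gᶜ.maxDegree ^ 2 := by
      rw [sq]
      exact Nat.mul_le_mul_right _ (degree_le_maxDegree _ u)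

end DominatingEdge

section Minor

variable {V W ι : Type*} {G : SimpleGraph V} {H : SimpleGraph W} {H' : SimpleGraph ι}

theorem isMinor_of_isContained (hH : H' ⊑ H) (hG : H.IsMinor G) : H'.IsMinor G := by
  obtain ⟨φ⟩ := hH
  obtain ⟨f, hne, hconn, hdisj, hadj⟩ := hG
  exact ⟨f ∘ φ, fun i => hne _, fun i => hconn _, fun i j hij => hdisj (φ.injective.ne hij),
    fun i j hij => hadj (φ.toHom.map_adj hij)⟩

theorem card_subsingleton_le_cliqueNum [Finite V] [Fintype ι] {f : ι → Set V}
    [DecidablePred fun i => (f i).Subsingleton] (hne : ∀ i, (f i).Nonempty)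
    (hdisj : Pairwise fun i j => Disjoint (f i) (f j))
    (hadj : Pairwise fun i j => ∃ v ∈ f i, ∃ w ∈ f j, G.Adj v w) :
    #{i | (f i).Subsingleton} ≤ G.cliqueNum := by
  classical
  choose g hg using hne
  have g_injective : Function.Injective g := fun i j hij =>
    by_contra fun h => Set.disjoint_left.1 (hdisj h) (hg i) (hij ▸ hg j)
  have hclique : G.IsClique (({i | (f i).Subsingleton} : Finset ι).image g : Set V) := by
    rw [coe_image]
    rintro _ ⟨i, hi, rfl⟩ _ ⟨j, hj, rfl⟩ hij
    obtain ⟨v, hv, w, hw, hvw⟩ := hadj (ne_of_apply_ne g hij)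
    rw [mem_coe, mem_filter_univ] at hi hj
    rwa [hi (hg i) hv, hj (hg j) hw]
  rw [← card_image_of_injective _ g_injective]
  exact hclique.card_le_cliqueNum

theorem two_mul_card_le_of_isMinor_completeGraph [Fintype V] [Fintype ι]
    (h : (completeGraph ι).IsMinor G) : 2 * Fintype.card ι ≤ Fintype.card V + G.cliqueNum := by
  classical
  obtain ⟨f, hne, -, hdisj, hadj⟩ := h
  have two_le (i : ι) : 2 ≤ (f i).ncard + if (f i).Subsingleton then 1 else 0 := by
    split_ifs with hi
    · have := (Set.ncard_pos (Set.toFinite _)).2 (hne i)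
      omega
    · exact (Set.one_lt_ncard_iff_nontrivial).2 (Set.not_subsingleton_iff.1 hi)
  have sum_ncard_le : ∑ i, (f i).ncard ≤ Fintype.card V := by
    rw [← finsum_eq_sum_of_fintype, ← Set.ncard_iUnion_of_finite (fun _ => Set.toFinite _) hdisj,
      ← Nat.card_eq_fintype_card]
    exact Set.ncard_le_card _
  calc
    2 * Fintype.card ι = ∑ _i : ι, 2 := by rw [sum_const, card_univ, smul_eq_mul, mul_comm]
    _ ≤ ∑ i, ((f i).ncard + if (f i).Subsingleton then 1 else 0) := sum_le_sum fun i _ => two_le i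
    _ = ∑ i, (f i).ncard + #{i | (f i).Subsingleton} := by rw [sum_add_distrib, card_filter]
    _ ≤ Fintype.card V + G.cliqueNum :=
      add_le_add sum_ncard_le (card_subsingleton_le_cliqueNum hne hdisj fun i j hij => hadj hij)

theorem isMinor_completeGraph_of_isClique_of_isMatching {K : Set V} (hK : G.IsClique K)
    {M : (dominatingEdgeGraph G).Subgraph} (hM : M.IsMatching) (hKM : Disjoint K M.verts) :
    (completeGraph (K ⊕ M.edgeSet)).IsMinor G := by
  let f : K ⊕ M.edgeSet → Set V := Sum.elim (fun v => {v.1}) fun e => e.1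
  have hne (i) : (f i).Nonempty := by
    rcases i with v | ⟨⟨a, b⟩, he⟩
    · exact Set.singleton_nonempty _
    · exact ⟨a, Sym2.mem_mk_left a b⟩
  have hconn (i) : (G.induce (f i)).Connected := by
    rcases i with v | ⟨⟨a, b⟩, he⟩
    · have : Nonempty (f (.inl v)) := (hne (.inl v)).to_subtype
      have : Subsingleton (f (.inl v)) := Set.subsingleton_singleton.coe_sort
      exact .of_subsingleton
    · change (G.induce (s(a, b) : Set V)).Connected
      rw [Sym2.coe_mk]
      exact induce_pair_connected_of_adj (M.adj_sub he).1
  have disjoint_edge (v : K) (e : M.edgeSet) : Disjoint (f (.inl v)) (f (.inr e)) :=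
    hKM.mono (Set.singleton_subset_iff.2 v.2) fun _ => Subgraph.mem_verts_of_mem_edge e.2
  have hdisj : Pairwise fun i j => Disjoint (f i) (f j) := by
    rintro (v | e) (w | e') hij
    · exact Set.disjoint_singleton.2 fun h => hij (congrArg Sum.inl (Subtype.ext h))
    · exact disjoint_edge v e'
    · exact (disjoint_edge w e).symm
    · exact disjoint_of_mem_edgeSet_of_ne hM e.2 e'.2 fun h =>
        hij (congrArg Sum.inr (Subtype.ext h))
  have adj_edge (i e) (hie : i ≠ .inr e) : ∃ v ∈ f i, ∃ w ∈ f (.inr e), G.Adj v w := by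
    obtain ⟨v, hv⟩ := hne i
    obtain ⟨w, hw, hwv⟩ := exists_adj_of_notMem_of_mem_edgeSet_dominatingEdgeGraph
      (M.edgeSet_subset e.2) (Set.disjoint_left.1 (hdisj hie) hv)
    exact ⟨v, hv, w, hw, hwv.symm⟩
  refine ⟨f, hne, hconn, hdisj, ?_⟩
  rintro i j hij
  rcases j with w | e'
  · rcases i with v | e
    · exact ⟨v, rfl, w, rfl, hK v.2 w.2 fun h => hij.ne (congrArg Sum.inl (Subtype.ext h))⟩
    · obtain ⟨w, hw, v, hv, hwv⟩ := adj_edge _ e hij.ne'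
      exact ⟨v, hv, w, hw, hwv.symm⟩
  · exact adj_edge i e' hij.ne

end Minor

section HadwigerNumber

variable {V ι : Type*} [Fintype V] {G : SimpleGraph V}

theorem two_mul_hadwigerNumber_le : 2 * G.hadwigerNumber ≤ Fintype.card V + G.cliqueNum := by
  have : G.hadwigerNumber ≤ (Fintype.card V + G.cliqueNum) / 2 := csSup_le' fun t ht => by
    have := two_mul_card_le_of_isMinor_completeGraph ht
    rw [Fintype.card_fin] at this
    omega
  omega

theorem card_le_hadwigerNumber_of_isMinor_completeGraph [Finite ι]
    (h : (completeGraph ι).IsMinor G) : Nat.card ι ≤ G.hadwigerNumber := by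
  refine le_csSup ⟨Fintype.card V + G.cliqueNum, fun t ht => ?_⟩ ?_
  · have := two_mul_card_le_of_isMinor_completeGraph ht
    rw [Fintype.card_fin] at this
    omega
  · exact isMinor_of_isContained (Iso.completeGraph (Finite.equivFin ι)).symm.isContained h

theorem card_add_card_le_two_mul_hadwigerNumber_add_one [DecidableEq V] [DecidableRel G.Adj]
    {K : Finset V} (hK : G.IsClique K)
    (h : #K + 2 * Gᶜ.maxDegree ^ 2 < Fintype.card V) :
    Fintype.card V + #K ≤ 2 * G.hadwigerNumber + 1 := by
  classical
  have hcard : ((K : Set V)ᶜ).ncard = Fintype.card V - #K := by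
    rw [Set.ncard_compl, Nat.card_eq_fintype_card, Set.ncard_coe_finset]
  have := maxDegree_compl_dominatingEdgeGraph_le (G := G)
  obtain ⟨M, hM, hMK, hcardM⟩ := exists_isMatching_verts_subset_of_two_mul_maxDegree_compl_lt
    (G := dominatingEdgeGraph G) (K : Set V)ᶜ (by omega)
  have := ncard_verts_le_two_mul_ncard_edgeSet hM
  have := card_le_hadwigerNumber_of_isMinor_completeGraph <|
    isMinor_completeGraph_of_isClique_of_isMatching hK hM (Set.subset_compl_iff_disjoint_left.1 hMK)
  rw [Nat.card_sum, Nat.card_coe_set_eq, Nat.card_coe_set_eq, Set.ncard_coe_finset] at this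
  omega

theorem maxDegree_compl_le [DecidableEq V] [DecidableRel G.Adj] :
    Gᶜ.maxDegree ≤ Fintype.card V - G.minDegree - 1 := by
  refine maxDegree_le_of_forall_degree_le _ _ fun v => ?_
  have := G.minDegree_le_degree v
  rw [degree_compl]
  omega

theorem hadwigerNumber_of_dense_general [DecidableEq V] [DecidableRel G.Adj]
    (h : G.cliqueNum + 2 * Gᶜ.maxDegree ^ 2 < Fintype.card V) :
    G.hadwigerNumber = (Fintype.card V + G.cliqueNum) / 2 := by
  obtain ⟨K, hK⟩ := G.exists_isNClique_cliqueNum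
  have upper := two_mul_hadwigerNumber_le (G := G)
  have lower := card_add_card_le_two_mul_hadwigerNumber_add_one hK.isClique (hK.card_eq.symm ▸ h)
  rw [hK.card_eq] at lower
  omega

end HadwigerNumber

/-- If `G` has `n` vertices, minimum degree `δ`, clique number `ω`, and
`Δ = n - δ - 1` satisfies `n ≥ ω + 2Δ² + 2`, then the Hadwiger number of `G`
equals `⌊(n + ω)/2⌋`. -/
theorem hadwigerNumber_of_dense {V : Type*} [Fintype V] [Nonempty V] (G : SimpleGraph V)
    [DecidableRel G.Adj]
    (hn : G.cliqueNum + 2 * (Fintype.card V - G.minDegree - 1) ^ 2 + 2 ≤ Fintype.card V) :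
    G.hadwigerNumber = (Fintype.card V + G.cliqueNum) / 2 := by
  classical
  have := maxDegree_compl_le (G := G)
  exact hadwigerNumber_of_dense_general (by grw [this]; omega)
end

section
/- For every nonnegative integer s, every graph G whose number of vertices n(G) plus clique number ω(G) satisfies n(G) + ω(G) ≤ s has at most 3^{s/3} cliques. -/
/-!
Deleting `w` matches the cliques containing `w` with the cliques of the graph induced on the
neighborhood `N(w)`. Let `v` have maximum degree `Δ`. A clique that is not contained in `N(v)`
contains one of the `n - Δ` vertices outside `N(v)`, and there are as many cliques in `N(v)` as
cliques containing `v`. By induction each of these `n - Δ + 1` families has at most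
`r ^ (Δ + ω - 1)` members, because `N(w)` has at most `Δ` vertices and its clique number is at most
`ω - 1`. So `r ^ (n + ω)` bounds the number of cliques as soon as `m ≤ r ^ m` for every natural
number `m`, and `r = 3 ^ (1 / 3)` is the least such `r`, with equality at `m = 3`.
-/

section Counting

variable {V : Type*} (G : SimpleGraph V)

theorem cliqueCount_induce_eq_ncard (S : Set V) [Fintype S] :
    (G.induce S).cliqueCount = {C : Finset V | G.IsClique (C : Set V) ∧ (C : Set V) ⊆ S}.ncard := by
  classical
  refine Set.ncard_congr (s := {C : Finset S | (G.induce S).IsClique (C : Set S)})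
    (fun C _ ↦ C.map (Function.Embedding.subtype _)) (fun C hC ↦ ?_)
    (fun _ _ _ _ h ↦ Finset.map_injective _ h) (fun C hC ↦ ?_)
  · exact ⟨by simpa [SimpleGraph.isClique_induce_iff] using hC, C.map_subtype_subset⟩
  · have map_C : (C.subtype (· ∈ S)).map (Function.Embedding.subtype _) = C :=
      Finset.subtype_map_of_mem fun _ hx ↦ hC.2 hx
    refine ⟨C.subtype (· ∈ S), SimpleGraph.isClique_induce_iff.2 ?_, map_C⟩
    rw [← Function.Embedding.coe_subtype, ← Finset.coe_map, map_C]
    exact hC.1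

variable [Fintype V]

theorem cliqueCount_of_isEmpty [IsEmpty V] : G.cliqueCount = 1 := by
  have cliques_eq : {C : Finset V | G.IsClique (C : Set V)} = {∅} := by
    ext C
    simp [Finset.eq_empty_of_isEmpty C]
  exact (congrArg Set.ncard cliques_eq).trans (Set.ncard_singleton _)

theorem cliqueCountOn_eq_cliqueCount_induce_neighborSet (v : V) [Fintype (G.neighborSet v)] :
    G.cliqueCountOn v = (G.induce (G.neighborSet v)).cliqueCount := by
  classical
  rw [cliqueCount_induce_eq_ncard]
  refine Set.ncard_congr (s := {C : Finset V | G.IsClique (C : Set V) ∧ v ∈ C})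
    (fun C _ ↦ C.erase v) (fun C hC ↦ ⟨?_, fun w hw ↦ ?_⟩)
    (fun _ _ hC hD h ↦ Finset.erase_injOn' v hC.2 hD.2 h) (fun C hC ↦ ?_)
  · exact hC.1.subset (Finset.coe_subset.2 (C.erase_subset v))
  · obtain ⟨hwv, hwC⟩ := Finset.mem_erase.1 hw
    exact hC.1 hC.2 hwC hwv.symm
  · have hv : v ∉ C := fun hvC ↦ G.irrefl (hC.2 hvC)
    refine ⟨insert v C, ⟨?_, C.mem_insert_self v⟩, Finset.erase_insert hv⟩
    rw [Finset.coe_insert]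
    exact hC.1.insert fun w hw _ ↦ hC.2 hw

theorem cliqueCount_le_cliqueCount_induce_add_sum_cliqueCountOn [DecidableEq V] (S : Set V)
    [Fintype S] :
    G.cliqueCount ≤ (G.induce S).cliqueCount + ∑ w ∈ S.toFinsetᶜ, G.cliqueCountOn w := by
  let cliquesOn (w : V) : Set (Finset V) := {C | G.IsClique (C : Set V) ∧ w ∈ C}
  have cover : {C : Finset V | G.IsClique (C : Set V)} ⊆
      {C | G.IsClique (C : Set V) ∧ (C : Set V) ⊆ S} ∪ ⋃ w ∈ S.toFinsetᶜ, cliquesOn w := by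
    intro C hC
    by_cases hCS : (C : Set V) ⊆ S
    · exact Or.inl ⟨hC, hCS⟩
    · obtain ⟨w, hwC, hwS⟩ := Set.not_subset.1 hCS
      exact Or.inr (Set.mem_biUnion (by simpa using hwS) ⟨hC, hwC⟩)
  rw [cliqueCount_induce_eq_ncard]
  exact (Set.ncard_le_ncard cover (Set.toFinite _)).trans <| (Set.ncard_union_le _ _).trans <|
    Nat.add_le_add_left (Finset.set_ncard_biUnion_le _ _) _

theorem cliqueCount_le_cliqueCountOn_add_sum_cliqueCountOn [DecidableEq V] (v : V)
    [Fintype (G.neighborSet v)] :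
    G.cliqueCount ≤ G.cliqueCountOn v + ∑ w ∈ (G.neighborFinset v)ᶜ, G.cliqueCountOn w := by
  rw [cliqueCountOn_eq_cliqueCount_induce_neighborSet]
  exact cliqueCount_le_cliqueCount_induce_add_sum_cliqueCountOn G (G.neighborSet v)

end Counting

theorem cliqueNum_induce_neighborSet_lt {V : Type*} [Finite V] (G : SimpleGraph V) (v : V) :
    (G.induce (G.neighborSet v)).cliqueNum < G.cliqueNum := by
  classical
  obtain ⟨C, hC⟩ := (G.induce (G.neighborSet v)).exists_isNClique_cliqueNum
  rw [SimpleGraph.isNClique_induce_iff] at hC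
  have insert_v := hC.insert (a := v) fun _ hw ↦ C.map_subtype_subset hw
  exact insert_v.card_eq.ge.trans insert_v.isClique.card_le_cliqueNum

section PowerBound

variable {R : Type*} [Semiring R] [PartialOrder R] [IsOrderedRing R]

theorem cliqueCount_le_mul_of_forall_cliqueCountOn_le {V : Type*} [Fintype V] [DecidableEq V]
    (G : SimpleGraph V) (v : V) [Fintype (G.neighborSet v)] {b : R}
    (hb : ∀ w, (G.cliqueCountOn w : R) ≤ b) :
    (G.cliqueCount : R) ≤ ((G.neighborFinset v)ᶜ.card + 1 : ℕ) * b :=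
  calc (G.cliqueCount : R)
      ≤ G.cliqueCountOn v + ∑ w ∈ (G.neighborFinset v)ᶜ, (G.cliqueCountOn w : R) :=
        mod_cast Nat.mono_cast (α := R) (cliqueCount_le_cliqueCountOn_add_sum_cliqueCountOn G v)
    _ ≤ b + (G.neighborFinset v)ᶜ.card • b :=
        add_le_add (hb v) (Finset.sum_le_card_nsmul _ _ _ fun w _ ↦ hb w)
    _ = ((G.neighborFinset v)ᶜ.card + 1 : ℕ) * b := by
        rw [← nsmul_eq_mul, succ_nsmul, add_comm]

theorem cliqueCount_le_pow_card_add_cliqueNum {r : R} (hr : ∀ m : ℕ, (m : R) ≤ r ^ m)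
    {V : Type*} [Fintype V] (G : SimpleGraph V) :
    (G.cliqueCount : R) ≤ r ^ (Fintype.card V + G.cliqueNum) := by
  classical
  have one_le_r : 1 ≤ r := by simpa using hr 1
  induction hn : Fintype.card V using Nat.strong_induction_on generalizing V with
  | _ n ih =>
  subst hn
  cases isEmpty_or_nonempty V
  · simpa [cliqueCount_of_isEmpty] using one_le_pow₀ one_le_r
  obtain ⟨v, hv⟩ := G.exists_maximal_degree_vertex
  have cliqueCountOn_le (w : V) :
      (G.cliqueCountOn w : R) ≤ r ^ (G.degree v + (G.cliqueNum - 1)) := by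
    have card_eq : Fintype.card (G.neighborSet w) = G.degree w := G.card_neighborSet_eq_degree w
    rw [cliqueCountOn_eq_cliqueCount_induce_neighborSet]
    refine (ih _ (card_eq ▸ G.degree_lt_card_verts w) _ rfl).trans
      (pow_le_pow_right₀ one_le_r (Nat.add_le_add ?_ ?_))
    · exact card_eq ▸ hv ▸ G.degree_le_maxDegree w
    · exact Nat.le_sub_one_of_lt (cliqueNum_induce_neighborSet_lt G w)
  have card_add_degree : (G.neighborFinset v)ᶜ.card + G.degree v = Fintype.card V :=
    Finset.card_compl_add_card _
  have cliqueNum_pos : 0 < G.cliqueNum := (cliqueNum_induce_neighborSet_lt G v).pos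
  calc (G.cliqueCount : R)
      ≤ ((G.neighborFinset v)ᶜ.card + 1 : ℕ) * r ^ (G.degree v + (G.cliqueNum - 1)) :=
        cliqueCount_le_mul_of_forall_cliqueCountOn_le G v cliqueCountOn_le
    _ ≤ r ^ ((G.neighborFinset v)ᶜ.card + 1) * r ^ (G.degree v + (G.cliqueNum - 1)) :=
        mul_le_mul_of_nonneg_right (hr _) (pow_nonneg (zero_le_one.trans one_le_r) _)
    _ = r ^ (Fintype.card V + G.cliqueNum) := by
        rw [← pow_add]
        congr 1
        omega

end PowerBound

theorem pow_three_le_three_pow (m : ℕ) : m ^ 3 ≤ 3 ^ m := by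
  obtain hm | hm := lt_or_ge m 3
  · interval_cases m <;> norm_num
  · induction m, hm using Nat.le_induction with
    | base => rfl
    | succ n hn ih =>
      calc (n + 1) ^ 3
          ≤ 3 * n ^ 3 := by nlinarith [Nat.mul_le_mul hn hn, Nat.mul_le_mul_right (n * n) hn]
        _ ≤ 3 * 3 ^ n := Nat.mul_le_mul_left 3 ih
        _ = 3 ^ (n + 1) := (pow_succ' 3 n).symm

theorem natCast_le_three_rpow_div_three (m : ℕ) : (m : ℝ) ≤ 3 ^ ((m : ℝ) / 3) := by
  refine le_of_pow_le_pow_left₀ three_ne_zero (by positivity) ?_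
  rw [← Real.rpow_mul_natCast zero_le_three, Nat.cast_ofNat, div_mul_cancel₀ _ three_ne_zero,
    Real.rpow_natCast]
  exact mod_cast pow_three_le_three_pow m

/-- Every graph `G` with `n(G) + ω(G) ≤ s` has at most `3 ^ (s/3)` cliques. -/
theorem cliqueCount_le_of_card_add_cliqueNum_le (s : ℕ) {V : Type*} [Fintype V]
    (G : SimpleGraph V) (h : Fintype.card V + G.cliqueNum ≤ s) :
    (G.cliqueCount : ℝ) ≤ 3 ^ ((s : ℝ) / 3) := by
  have pow_eq (m : ℕ) : ((3 : ℝ) ^ (1 / 3 : ℝ)) ^ m = 3 ^ ((m : ℝ) / 3) := by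
    rw [← Real.rpow_mul_natCast zero_le_three, one_div_mul_eq_div]
  calc (G.cliqueCount : ℝ)
      ≤ ((3 : ℝ) ^ (1 / 3 : ℝ)) ^ (Fintype.card V + G.cliqueNum) :=
        cliqueCount_le_pow_card_add_cliqueNum
          (fun m ↦ (natCast_le_three_rpow_div_three m).trans_eq (pow_eq m).symm) G
    _ ≤ ((3 : ℝ) ^ (1 / 3 : ℝ)) ^ s :=
        pow_le_pow_right₀ (Real.one_le_rpow (by norm_num) (by norm_num)) h
    _ = 3 ^ ((s : ℝ) / 3) := pow_eq s
end

section
/- Let α* = (2−√2)/2 − 0.001. If I is an independent set in a graph G all of whose vertices are good (i.e., every v ∈ I lies in a fraction at least α* of the cliques of G), then |I| ≤ 2. -/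
/-- `α* = (2 - √2)/2 - 0.001`. -/
noncomputable def alphaStar : ℝ := (2 - Real.sqrt 2) / 2 - 0.001

/-!
A clique meets an independent set `I` in at most one vertex. So the cliques meeting `I` number
`∑ v ∈ I, N v`, where `N v` counts the cliques through `v`; and for `a ∈ I`, deleting `a` from the
cliques through `a` yields `N a` distinct cliques that miss `I`. Dividing by the number of cliques,
`∑ v ∈ I, α_v + α_a ≤ 1`, so a common lower bound `α` of the `α_v` satisfies `(|I| + 1) α ≤ 1`,
which rules out `|I| ≥ 3` as soon as `α > 1 / 4`.
-/

section Cliques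

variable {V : Type*} {G : SimpleGraph V}

theorem eq_of_mem_isClique_of_mem_isIndepSet {s I : Set V} (hs : G.IsClique s)
    (hI : G.IsIndepSet I) {u v : V} (hus : u ∈ s) (hvs : v ∈ s) (huI : u ∈ I) (hvI : v ∈ I) :
    u = v :=
  by_contra fun huv => hI huI hvI huv (hs hus hvs huv)

variable [Fintype V]

open Classical in
/-- The cliques of `G`, the empty one included, gathered in a finset so that `cliqueCount` and
`cliqueCountOn` become cardinalities of finsets. -/
noncomputable def cliques (G : SimpleGraph V) : Finset (Finset V) :=
  {s | G.IsClique (s : Set V)}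

theorem mem_cliques {s : Finset V} : s ∈ cliques G ↔ G.IsClique (s : Set V) := by
  simp only [cliques, Finset.mem_filter_univ]

theorem cliqueCount_eq_card (G : SimpleGraph V) : G.cliqueCount = (cliques G).card :=
  Nat.subtype_card (cliques G) fun _ => mem_cliques

variable [DecidableEq V]

theorem cliqueCountOn_eq_card (G : SimpleGraph V) (v : V) :
    G.cliqueCountOn v = {s ∈ cliques G | v ∈ s}.card :=
  Nat.subtype_card _ fun s => by rw [Finset.mem_filter, mem_cliques]

theorem sum_cliqueCountOn_eq_card {I : Finset V} (hI : G.IsIndepSet (I : Set V)) :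
    ∑ v ∈ I, G.cliqueCountOn v = {s ∈ cliques G | ¬Disjoint s I}.card := by
  have hdisj : (I : Set V).PairwiseDisjoint fun v => {s ∈ cliques G | v ∈ s} := by
    intro u hu v hv huv
    refine Finset.disjoint_filter.mpr fun s hs hus hvs => huv ?_
    exact eq_of_mem_isClique_of_mem_isIndepSet (mem_cliques.mp hs) hI hus hvs hu hv
  have hunion : {s ∈ cliques G | ¬Disjoint s I} =
      I.biUnion fun v => {s ∈ cliques G | v ∈ s} := by
    ext s
    simp only [Finset.mem_filter, Finset.not_disjoint_iff, Finset.mem_biUnion]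
    tauto
  rw [hunion, Finset.card_biUnion hdisj]
  exact Finset.sum_congr rfl fun v _ => cliqueCountOn_eq_card G v

theorem cliqueCountOn_le_card_disjoint {I : Finset V} (hI : G.IsIndepSet (I : Set V)) {a : V}
    (ha : a ∈ I) : G.cliqueCountOn a ≤ {s ∈ cliques G | Disjoint s I}.card := by
  rw [cliqueCountOn_eq_card]
  refine Finset.card_le_card_of_injOn (·.erase a) (fun s hs => ?_) fun s hs t ht hst => ?_
  · obtain ⟨hs, has⟩ := Finset.mem_filter.mp hs
    have hclique : s.erase a ∈ cliques G :=
      mem_cliques.mpr ((mem_cliques.mp hs).subset (Finset.erase_subset a s))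
    have hdisj : Disjoint (s.erase a) I := Finset.disjoint_left.mpr fun v hv hvI =>
      Finset.ne_of_mem_erase hv (eq_of_mem_isClique_of_mem_isIndepSet (mem_cliques.mp hs) hI
        (Finset.mem_of_mem_erase hv) has hvI ha)
    exact Finset.mem_filter.mpr ⟨hclique, hdisj⟩
  · exact Finset.erase_injOn' a (Finset.mem_filter.mp hs).2 (Finset.mem_filter.mp ht).2 hst

end Cliques

section Fractions

variable {V : Type*} [Fintype V] {G : SimpleGraph V} {I : Finset V}

theorem sum_cliqueCountOn_add_le_cliqueCount (hI : G.IsIndepSet (I : Set V)) {a : V}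
    (ha : a ∈ I) : ∑ v ∈ I, G.cliqueCountOn v + G.cliqueCountOn a ≤ G.cliqueCount := by
  classical
  calc ∑ v ∈ I, G.cliqueCountOn v + G.cliqueCountOn a
      ≤ {s ∈ cliques G | ¬Disjoint s I}.card + {s ∈ cliques G | Disjoint s I}.card :=
        add_le_add (sum_cliqueCountOn_eq_card hI).le (cliqueCountOn_le_card_disjoint hI ha)
    _ = (cliques G).card := by rw [add_comm, Finset.card_filter_add_card_filter_not]
    _ = G.cliqueCount := (cliqueCount_eq_card G).symm

theorem sum_cliqueFraction_add_le_one (hI : G.IsIndepSet (I : Set V)) {a : V} (ha : a ∈ I) :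
    ∑ v ∈ I, (G.cliqueCountOn v : ℝ) / G.cliqueCount +
      (G.cliqueCountOn a : ℝ) / G.cliqueCount ≤ 1 := by
  rw [← Finset.sum_div, ← add_div]
  refine div_le_one_of_le₀ ?_ (Nat.cast_nonneg _)
  exact_mod_cast sum_cliqueCountOn_add_le_cliqueCount hI ha

theorem card_add_one_mul_le_one_of_le_cliqueFraction (hI : G.IsIndepSet (I : Set V))
    (hne : I.Nonempty) {α : ℝ}
    (hα : ∀ v ∈ I, α ≤ (G.cliqueCountOn v : ℝ) / G.cliqueCount) : (I.card + 1) * α ≤ 1 := by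
  obtain ⟨a, ha⟩ := hne
  calc (I.card + 1) * α = I.card • α + α := by rw [nsmul_eq_mul, add_one_mul]
    _ ≤ ∑ v ∈ I, (G.cliqueCountOn v : ℝ) / G.cliqueCount +
          (G.cliqueCountOn a : ℝ) / G.cliqueCount :=
        add_le_add (Finset.card_nsmul_le_sum I _ α hα) (hα a ha)
    _ ≤ 1 := sum_cliqueFraction_add_le_one hI ha

/-- The threshold is sharp: in the graph of `k + 1` isolated vertices every vertex lies in exactly
`1 / (k + 2)` of the cliques. -/
theorem indepSet_of_good_vertices_small_general (hI : G.IsIndepSet (I : Set V)) {k : ℕ} {α : ℝ}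
    (hα : 1 / (k + 2) < α)
    (hgood : ∀ v ∈ I, α ≤ (G.cliqueCountOn v : ℝ) / G.cliqueCount) : I.card ≤ k := by
  by_contra! hk
  have hα_pos : 0 < α := lt_trans (by positivity) hα
  have hcard : (k : ℝ) + 1 ≤ I.card := by exact_mod_cast hk
  have hne : I.Nonempty := Finset.card_pos.mp (Nat.zero_lt_of_lt hk)
  refine lt_irrefl (1 : ℝ) ?_
  calc (1 : ℝ) < (k + 2) * α := (div_lt_iff₀' (by positivity)).mp hα
    _ ≤ (I.card + 1) * α := by gcongr ?_ * α; linarith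
    _ ≤ 1 := card_add_one_mul_le_one_of_le_cliqueFraction hI hne hgood

end Fractions

theorem one_fourth_lt_alphaStar : 1 / 4 < alphaStar := by
  have hsqrt : √2 < 1.42 := (Real.sqrt_lt' (by norm_num)).mpr (by norm_num)
  unfold alphaStar
  linarith

/-- An independent set all of whose vertices are good (each lies in a fraction at least
`α*` of the cliques) has at most two vertices. -/
theorem indepSet_of_good_vertices_small {V : Type*} [Fintype V]
    (G : SimpleGraph V) (I : Finset V)
    (hI : (I : Set V).Pairwise fun u v => ¬ G.Adj u v)
    (hgood : ∀ v ∈ I, alphaStar ≤ (G.cliqueCountOn v : ℝ) / G.cliqueCount) :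
    I.card ≤ 2 := by
  exact indepSet_of_good_vertices_small_general hI (k := 2)
    (lt_of_eq_of_lt (by norm_num) one_fourth_lt_alphaStar) hgood
end

section
/- Let H be a connected graph on t vertices and let x be the number of edges of a maximum matching in the complement of H. Let G' be an H-minor-free graph whose complement has maximum degree at most one. If x < (2 − 3/log₂3)·t, then G' has fewer than 3^{(2t−x)/3} cliques; if x ≥ (2 − 3/log₂3)·t, then G' has fewer than 2^t cliques. -/
/-!
A graph whose complement has maximum degree at most one is complete multipartite with `p` parts
of size two and `q` parts of size one, so a clique picks at most one vertex from each part and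
there are `3 ^ p * 2 ^ q` cliques. The complement of a matching of size `j` in `Hᶜ` is a graph of
the same kind containing `H`. When `j ≤ p`, use `j` of the pairs of `G` for the matched vertices of
`H`. The other pairs supply one vertex each and, since two pairs induce a 4-cycle which contracts to
a triangle, one further branch set for every two of them. Hence `H` is a minor of `G` as soon as
`|H| ≤ 2 * j + (p - j) + ⌊(p - j) / 2⌋ + q`. Taking `j = min p x` in the contrapositive gives
`2 * p + q < t` or `3 * p + 2 * q + x < 2 * t`, and the bounds follow from `3 < 2 ^ 2` and
`2 < 3 ^ (2 / 3)` respectively.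
-/

open SimpleGraph Function
open scoped Finset

section Minors

variable {U V W : Type*} {F : SimpleGraph U} {G : SimpleGraph V} {H : SimpleGraph W}

theorem isMinor_of_isContained_of_isMinor (hFH : F ⊑ H) (hHG : H.IsMinor G) : F.IsMinor G := by
  obtain ⟨φ⟩ := hFH
  obtain ⟨B, hne, hconn, hdisj, hadj⟩ := hHG
  exact ⟨B ∘ φ, fun _ => hne _, fun _ => hconn _, fun _ _ huv => hdisj (φ.injective.ne huv),
    fun _ _ huv => hadj (φ.toHom.map_adj huv)⟩

theorem isMinor_of_isMinor_of_isContained (hFH : F.IsMinor H) (hHG : H ⊑ G) : F.IsMinor G := by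
  obtain ⟨φ⟩ := hHG
  obtain ⟨B, hne, hconn, hdisj, hadj⟩ := hFH
  refine ⟨fun u => φ '' B u, fun u => (hne u).image φ, fun u => ?_,
    fun u v huv => (Set.disjoint_image_iff φ.injective).2 (hdisj huv), fun u v huv => ?_⟩
  · exact (hconn u).map (induceHom φ.toHom (Set.mapsTo_image φ (B u)))
      (Set.surjective_mapsTo_image_restrict φ (B u))
  · obtain ⟨x, hx, y, hy, hxy⟩ := hadj huv
    exact ⟨φ x, Set.mem_image_of_mem φ hx, φ y, Set.mem_image_of_mem φ hy, φ.toHom.map_adj hxy⟩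

end Minors

section CliqueCount

theorem isClique_comap_top_iff {V ι : Type*} {f : V → ι} {s : Set V} :
    ((⊤ : SimpleGraph ι).comap f).IsClique s ↔ s.InjOn f := by
  simp only [isClique_iff, Set.Pairwise, comap_adj, top_adj, Set.InjOn, not_imp_not]

variable {V W : Type*} [Fintype V] [Fintype W]

theorem cliqueCount_congr {G : SimpleGraph V} {H : SimpleGraph W} (φ : G ≃g H) :
    G.cliqueCount = H.cliqueCount := by
  refine Nat.card_congr (φ.toEquiv.finsetCongr.subtypeEquiv fun s => ?_)
  simp [isClique_iff, Set.Pairwise, φ.map_adj_iff]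

theorem cliqueCount_comap_top {ι : Type*} [Fintype ι] [DecidableEq ι] (f : V → ι) :
    ((⊤ : SimpleGraph ι).comap f).cliqueCount = ∏ i, (#{v | f v = i} + 1) := by
  classical
  let choices : Finset (ι → Option V) := Fintype.piFinset fun i => Finset.insertNone {v | f v = i}
  have mem_choices {c : ι → Option V} : c ∈ choices ↔ ∀ i v, c i = some v → f v = i := by
    simp [choices]
  have card_choices : #choices = ∏ i, (#{v | f v = i} + 1) := by
    simp [choices, Fintype.card_piFinset]
  rw [SimpleGraph.cliqueCount, ← card_choices,
    Nat.subtype_card (Finset.univ.filter fun s : Finset V =>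
      ((⊤ : SimpleGraph ι).comap f).IsClique s) (by simp)]
  symm
  refine Finset.card_bij (fun c _ => ({v | c (f v) = some v} : Finset V)) ?_ ?_ ?_
  · intro c _
    simp only [Finset.mem_filter_univ, isClique_comap_top_iff, Finset.coe_filter_univ]
    intro u (hu : c (f u) = some u) v (hv : c (f v) = some v) huv
    exact Option.some_injective V (by rw [← hu, ← hv, huv])
  · intro c hc c' hc' h
    rw [mem_choices] at hc hc'
    ext i v
    have hv : c (f v) = some v ↔ c' (f v) = some v := by simpa using Finset.ext_iff.1 h v
    grind
  · intro s hs
    rw [Finset.mem_filter_univ, isClique_comap_top_iff] at hs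
    have exists_choice (i) : ∃ o : Option V, ∀ v, o = some v ↔ v ∈ s ∧ f v = i := by
      by_cases h : ∃ v ∈ s, f v = i
      · obtain ⟨v, hv, rfl⟩ := h
        exact ⟨some v, fun w => by
          simpa using ⟨fun h => h ▸ ⟨hv, rfl⟩, fun h => hs hv h.1 h.2.symm⟩⟩
      · exact ⟨none, by simpa using h⟩
    choose c hc using exists_choice
    exact ⟨c, mem_choices.2 fun i v h => ((hc i v).1 h).2, by ext; simp [hc]⟩

end CliqueCount

/-- The complete multipartite graph with a part of size two for each element of `P` and a part of
size one for each element of `Q`: the normal form of the complement of a matching. The vertices of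
the part indexed by `p : P` are `.inl (p, true)` and `.inl (p, false)`. -/
def cocktailParty (P Q : Type*) : SimpleGraph (P × Bool ⊕ Q) :=
  (⊤ : SimpleGraph (P ⊕ Q)).comap (Sum.map Prod.fst id)

namespace cocktailParty

variable {P P' Q Q' : Type*}

theorem adj_iff {u v : P × Bool ⊕ Q} :
    (cocktailParty P Q).Adj u v ↔ Sum.map Prod.fst id u ≠ Sum.map Prod.fst id v :=
  Iff.rfl

theorem cliqueCount_eq [Fintype P] [Fintype Q] :
    (cocktailParty P Q).cliqueCount = 3 ^ Fintype.card P * 2 ^ Fintype.card Q := by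
  classical
  rw [cocktailParty, cliqueCount_comap_top]
  simp [Finset.card_filter, Fintype.sum_sum_type, Fintype.sum_prod_type, -Finset.sum_boole,
    Finset.sum_add_distrib]

theorem isContained_of_embedding (f : P ↪ P') (g : Q ↪ Q') :
    cocktailParty P Q ⊑ cocktailParty P' Q' := by
  refine ⟨⟨⟨Sum.map (Prod.map f id) g, ?_⟩, ?_⟩⟩
  · rintro (⟨p, b⟩ | q) (⟨p', b'⟩ | q') <;> simp [adj_iff]
  · exact (f.injective.prodMap injective_id).sumMap g.injective

/-- Equivalences of the index types of the pairs and of the singletons induce an isomorphism. -/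
def congr (f : P ≃ P') (g : Q ≃ Q') : cocktailParty P Q ≃g cocktailParty P' Q' where
  toEquiv := (f.prodCongr (.refl Bool)).sumCongr g
  map_rel_iff' := by
    rintro (⟨p, b⟩ | q) (⟨p', b'⟩ | q') <;> simp [adj_iff]

theorem isMinor_of_prod_bool_embedding {R A : Type*} (f : A × Bool ↪ R) :
    (cocktailParty P (R ⊕ A ⊕ Q)).IsMinor (cocktailParty (P ⊕ R) Q) := by
  let B : P × Bool ⊕ R ⊕ A ⊕ Q → Set ((P ⊕ R) × Bool ⊕ Q)
    | .inl (p, b) => {.inl (.inl p, b)}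
    | .inr (.inl r) => {.inl (.inr r, true)}
    | .inr (.inr (.inl a)) =>
      {.inl (.inr (f (a, true)), false), .inl (.inr (f (a, false)), false)}
    | .inr (.inr (.inr q)) => {.inr q}
  refine ⟨B, ?_, ?_, ?_, ?_⟩
  · rintro (⟨p, b⟩ | r | a | q) <;> simp [B]
  · rintro (⟨p, b⟩ | r | a | q)
    case inr.inr.inl => exact induce_pair_connected_of_adj (by simp [adj_iff])
    all_goals exact Connected.of_subsingleton
  · rintro (⟨p, b⟩ | r | a | q) (⟨p', b'⟩ | r' | a' | q') h <;> simp_all [B, eq_comm]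
  · have ne_or_ne (r : R) (a : A) : r ≠ f (a, true) ∨ r ≠ f (a, false) := by
      by_contra! h
      simpa using f.injective (h.1.symm.trans h.2)
    have ne_or_ne' (r : R) (a : A) : f (a, true) ≠ r ∨ f (a, false) ≠ r :=
      (ne_or_ne r a).imp Ne.symm Ne.symm
    rintro (⟨p, b⟩ | r | a | q) (⟨p', b'⟩ | r' | a' | q') <;>
      simp [B, adj_iff, ne_or_ne, ne_or_ne']

theorem isMinor_of_card_le [Fintype P] [Fintype P'] [Fintype Q] [Fintype Q']
    (hP : Fintype.card P ≤ Fintype.card P')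
    (hQ : Fintype.card Q ≤ (Fintype.card P' - Fintype.card P) +
      (Fintype.card P' - Fintype.card P) / 2 + Fintype.card Q') :
    (cocktailParty P Q).IsMinor (cocktailParty P' Q') := by
  let R := Fin (Fintype.card P' - Fintype.card P)
  let A := Fin ((Fintype.card P' - Fintype.card P) / 2)
  obtain ⟨f⟩ : Nonempty (A × Bool ↪ R) := Embedding.nonempty_of_card_le <| by
    simp only [A, R, Fintype.card_prod, Fintype.card_fin, Fintype.card_bool]
    omega
  obtain ⟨g⟩ : Nonempty (Q ↪ R ⊕ A ⊕ Q') := Embedding.nonempty_of_card_le <| by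
    simp only [A, R, Fintype.card_sum, Fintype.card_fin]
    omega
  obtain ⟨h⟩ : Nonempty (P ⊕ R ↪ P') := Embedding.nonempty_of_card_le <| by
    simp only [R, Fintype.card_sum, Fintype.card_fin]
    omega
  exact isMinor_of_isContained_of_isMinor (isContained_of_embedding (.refl P) g)
    (isMinor_of_isMinor_of_isContained (isMinor_of_prod_bool_embedding f)
      (isContained_of_embedding h (.refl Q')))

end cocktailParty

section Matching

variable {V : Type*} {M : SimpleGraph V}

/-- For a graph `M` of maximum degree one, the correspondence between the vertices of the
cocktail party graph on the edges and isolated vertices of `M` and the vertices of `M`; the ends of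
an edge are ordered arbitrarily by `Quot.out`. -/
noncomputable def matchingVertex (M : SimpleGraph V) :
    M.edgeSet × Bool ⊕ (M.supportᶜ : Set V) → V
  | .inl (e, true) => (Quot.out e.1).1
  | .inl (e, false) => (Quot.out e.1).2
  | .inr v => v

theorem mk_matchingVertex (e : M.edgeSet) (b : Bool) :
    s(matchingVertex M (.inl (e, b)), matchingVertex M (.inl (e, !b))) = e := by
  have mk_out : s((Quot.out e.1).1, (Quot.out e.1).2) = e.1 := Quot.out_eq e.1
  cases b
  · rw [Sym2.eq_swap]
    exact mk_out
  · exact mk_out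

theorem adj_matchingVertex (e : M.edgeSet) (b : Bool) :
    M.Adj (matchingVertex M (.inl (e, b))) (matchingVertex M (.inl (e, !b))) := by
  rw [← mem_edgeSet, mk_matchingVertex]
  exact e.2

theorem not_adj_matchingVertex_inr (v : (M.supportᶜ : Set V)) (w : V) :
    ¬ M.Adj (matchingVertex M (.inr v)) w :=
  fun h => v.2 ⟨w, h⟩

theorem matchingVertex_injective (hM : ∀ v, (M.neighborSet v).Subsingleton) :
    Injective (matchingVertex M) := by
  rintro (⟨e, b⟩ | v) (⟨e', b'⟩ | v') h
  · have hadj := adj_matchingVertex e b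
    have partner_eq := hM _ hadj (h ▸ adj_matchingVertex e' b')
    obtain rfl : e = e' := Subtype.ext <| by
      rw [← mk_matchingVertex e b, ← mk_matchingVertex e' b', h, partner_eq]
    obtain rfl | rfl : b' = b ∨ b' = !b := by cases b <;> cases b' <;> simp
    · rfl
    · exact absurd h hadj.ne
  · exact absurd (h ▸ adj_matchingVertex e b) (not_adj_matchingVertex_inr v' _)
  · exact absurd (h ▸ adj_matchingVertex e' b') (not_adj_matchingVertex_inr v _)
  · exact congrArg _ (Subtype.ext h)

theorem matchingVertex_surjective : Surjective (matchingVertex M) := by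
  intro v
  by_cases hv : v ∈ M.support
  · obtain ⟨w, hvw⟩ := hv
    have hmem : v ∈ (⟨s(v, w), hvw⟩ : M.edgeSet).1 := Sym2.mem_mk_left v w
    rw [← mk_matchingVertex _ true, Sym2.mem_iff] at hmem
    rcases hmem with h | h <;> exact ⟨_, h.symm⟩
  · exact ⟨.inr ⟨v, hv⟩, rfl⟩

theorem adj_matchingVertex_inl_iff (hM : ∀ v, (M.neighborSet v).Subsingleton) {e : M.edgeSet}
    {b : Bool} {y : M.edgeSet × Bool ⊕ (M.supportᶜ : Set V)} :
    M.Adj (matchingVertex M (.inl (e, b))) (matchingVertex M y) ↔ y = .inl (e, !b) :=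
  ⟨fun h => matchingVertex_injective hM (hM _ h (adj_matchingVertex e b)),
    fun h => h ▸ adj_matchingVertex e b⟩

theorem nonempty_cocktailParty_iso_compl (hM : ∀ v, (M.neighborSet v).Subsingleton) :
    Nonempty (cocktailParty M.edgeSet (M.supportᶜ : Set V) ≃g Mᶜ) := by
  have hinj := matchingVertex_injective hM
  refine ⟨.ofBijective _ ⟨hinj, matchingVertex_surjective⟩, ?_⟩
  intro x y
  change Mᶜ.Adj (matchingVertex M x) (matchingVertex M y) ↔ _
  rw [compl_adj, hinj.ne_iff, cocktailParty.adj_iff]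
  rcases x with ⟨e, b⟩ | v
  · rw [adj_matchingVertex_inl_iff hM]
    rcases y with ⟨e', b'⟩ | v'
    · cases b <;> cases b' <;> simp [eq_comm]
    · simp
  · rcases y with ⟨e', b'⟩ | v' <;> simp [not_adj_matchingVertex_inr]

theorem exists_cocktailParty_fin_iso_compl [Finite V]
    (hM : ∀ v, (M.neighborSet v).Subsingleton) :
    ∃ q, 2 * M.edgeSet.ncard + q = Nat.card V ∧
      Nonempty (cocktailParty (Fin M.edgeSet.ncard) (Fin q) ≃g Mᶜ) := by
  obtain ⟨φ⟩ := nonempty_cocktailParty_iso_compl hM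
  refine ⟨M.supportᶜ.ncard, ?_,
    ⟨(cocktailParty.congr (Finite.equivFin _).symm (Finite.equivFin _).symm).trans φ⟩⟩
  rw [← Nat.card_congr φ.toEquiv, Nat.card_sum, Nat.card_prod, Nat.card_eq_fintype_card (α := Bool),
    Fintype.card_bool, mul_comm]
  rfl

variable [Fintype V]

theorem exists_isMatching_ncard_edgeSet_eq_matchingNumber (G : SimpleGraph V) :
    ∃ M : G.Subgraph, M.IsMatching ∧ M.edgeSet.ncard = G.matchingNumber := by
  refine Nat.sSup_mem (s := {k | ∃ M : G.Subgraph, M.IsMatching ∧ M.edgeSet.ncard = k}) ?_ ?_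
  · exact ⟨0, ⊥, by simp [Subgraph.IsMatching], by simp⟩
  · refine ⟨G.edgeSet.ncard, ?_⟩
    rintro _ ⟨M, -, rfl⟩
    exact Set.ncard_le_ncard M.edgeSet_subset

theorem exists_le_ncard_edgeSet_eq {G : SimpleGraph V} {j : ℕ} (hj : j ≤ G.matchingNumber) :
    ∃ M ≤ G, (∀ v, (M.neighborSet v).Subsingleton) ∧ M.edgeSet.ncard = j := by
  obtain ⟨N, hN, hcard⟩ := exists_isMatching_ncard_edgeSet_eq_matchingNumber G
  obtain ⟨s, hsN, hs⟩ := Set.exists_subset_card_eq (hj.trans_eq hcard.symm)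
  have adj_of_mem {v w : V} (h : s(v, w) ∈ s) : N.Adj v w := hsN h
  refine ⟨fromEdgeSet s, fun v w h => (adj_of_mem h.1).adj_sub,
    fun v u hu w hw => hN.eq_of_adj_left (adj_of_mem hu.1) (adj_of_mem hw.1), ?_⟩
  rw [edgeSet_fromEdgeSet, sdiff_eq_left.2, hs]
  exact Set.disjoint_left.2 fun e he => G.not_isDiag_of_mem_edgeSet (N.edgeSet_subset (hsN he))

theorem isMinor_cocktailParty {P Q : Type*} [Fintype P] [Fintype Q] {H : SimpleGraph V}
    {j : ℕ} (hj : j ≤ Hᶜ.matchingNumber) (hjP : j ≤ Fintype.card P)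
    (hV : Fintype.card V ≤
      2 * j + ((Fintype.card P - j) + (Fintype.card P - j) / 2 + Fintype.card Q)) :
    H.IsMinor (cocktailParty P Q) := by
  obtain ⟨M, hMH, hM, rfl⟩ := exists_le_ncard_edgeSet_eq hj
  obtain ⟨q, hq, ⟨φ⟩⟩ := exists_cocktailParty_fin_iso_compl hM
  have hH : H ⊑ cocktailParty (Fin M.edgeSet.ncard) (Fin q) :=
    (IsContained.of_le (le_compl_comm.1 hMH)).trans φ.isContained'
  rw [Nat.card_eq_fintype_card] at hq
  refine isMinor_of_isContained_of_isMinor hH (cocktailParty.isMinor_of_card_le ?_ ?_)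
  · rwa [Fintype.card_fin]
  · rw [Fintype.card_fin, Fintype.card_fin]
    omega

end Matching

section Estimates

theorem two_le_three_rpow_two_thirds : (2 : ℝ) ≤ 3 ^ (2 / 3 : ℝ) := by
  refine le_of_pow_le_pow_left₀ (n := 3) (by norm_num) (by positivity) ?_
  rw [← Real.rpow_natCast (3 ^ (2 / 3 : ℝ)), ← Real.rpow_mul (by norm_num)]
  norm_num

theorem three_pow_mul_two_pow_le_two_pow (p q : ℕ) :
    (3 ^ p * 2 ^ q : ℝ) ≤ 2 ^ (2 * p + q) := by
  rw [pow_add, pow_mul]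
  gcongr
  norm_num

theorem three_pow_mul_two_pow_le_three_rpow (p q : ℕ) :
    (3 ^ p * 2 ^ q : ℝ) ≤ 3 ^ (p + 2 / 3 * q : ℝ) := by
  rw [Real.rpow_add (by norm_num), Real.rpow_mul (by norm_num), Real.rpow_natCast,
    Real.rpow_natCast]
  gcongr
  exact two_le_three_rpow_two_thirds

theorem two_rpow_lt_three_rpow_iff (t x : ℝ) :
    (2 : ℝ) ^ t < 3 ^ ((2 * t - x) / 3) ↔ x < (2 - 3 / Real.logb 2 3) * t := by
  have hlog : 0 < Real.logb 2 3 := Real.logb_pos (by norm_num) (by norm_num)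
  rw [← Real.logb_lt_logb_iff (b := 2) (by norm_num) (by positivity) (by positivity),
    Real.logb_rpow (by norm_num) (by norm_num), Real.logb_rpow_eq_mul_logb_of_pos (by norm_num),
    ← div_lt_iff₀ hlog, lt_div_iff₀ (by norm_num), lt_sub_comm]
  ring_nf

end Estimates

section Main

variable {V W : Type*} [Fintype V] [Fintype W] {G : SimpleGraph V} {H : SimpleGraph W}

theorem cliqueCount_lt_max (hfree : ¬ H.IsMinor G)
    (hdeg : ∀ v, (Gᶜ.neighborSet v).Subsingleton) :
    (G.cliqueCount : ℝ) < max (2 ^ Fintype.card W)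
      (3 ^ ((2 * Fintype.card W - Hᶜ.matchingNumber : ℝ) / 3)) := by
  obtain ⟨q, -, ⟨φ⟩⟩ := exists_cocktailParty_fin_iso_compl hdeg
  rw [compl_compl] at φ
  generalize Gᶜ.edgeSet.ncard = p at φ
  have card_gt {j : ℕ} (hj : j ≤ Hᶜ.matchingNumber) (hjp : j ≤ p) :
      2 * j + ((p - j) + (p - j) / 2 + q) < Fintype.card W := by
    by_contra! hcard
    exact hfree (isMinor_of_isMinor_of_isContained
      (isMinor_cocktailParty hj (by simpa) (by simpa)) φ.isContained)
  rw [← cliqueCount_congr φ, cocktailParty.cliqueCount_eq, Fintype.card_fin, Fintype.card_fin]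
  push_cast
  rcases le_or_gt p Hᶜ.matchingNumber with hp | hp
  · refine lt_max_of_lt_left ((three_pow_mul_two_pow_le_two_pow p q).trans_lt ?_)
    have := card_gt hp le_rfl
    exact pow_lt_pow_right₀ (by norm_num) (by omega)
  · refine lt_max_of_lt_right ((three_pow_mul_two_pow_le_three_rpow p q).trans_lt ?_)
    have hcard : 3 * p + 2 * q + Hᶜ.matchingNumber < 2 * Fintype.card W := by
      have := card_gt le_rfl hp.le
      omega
    refine Real.rpow_lt_rpow_of_exponent_lt (by norm_num) ?_
    rify at hcard
    linarith

theorem cliqueCount_of_missing_matching_general (hfree : ¬ H.IsMinor G)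
    (hdeg : ∀ v, (Gᶜ.neighborSet v).ncard ≤ 1) :
    ((Hᶜ.matchingNumber : ℝ) < (2 - 3 / Real.logb 2 3) * Fintype.card W →
        (G.cliqueCount : ℝ) < 3 ^ ((2 * Fintype.card W - Hᶜ.matchingNumber : ℝ) / 3)) ∧
    ((2 - 3 / Real.logb 2 3) * Fintype.card W ≤ (Hᶜ.matchingNumber : ℝ) →
        (G.cliqueCount : ℝ) < 2 ^ Fintype.card W) := by
  have hlt := cliqueCount_lt_max hfree fun v => Set.ncard_le_one_iff_subsingleton.1 (hdeg v)
  have hiff := two_rpow_lt_three_rpow_iff (Fintype.card W) Hᶜ.matchingNumber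
  rw [Real.rpow_natCast] at hiff
  constructor <;> intro hx
  · rwa [max_eq_right (hiff.2 hx).le] at hlt
  · rwa [max_eq_left (not_lt.1 (mt hiff.1 hx.not_gt))] at hlt

end Main

/-- Let `H` be connected on `t` vertices with `x` the maximum matching size in its
complement, and let `G'` be an `H`-minor-free graph whose complement has maximum degree
at most one. If `x < (2 - 3/log₂ 3) t` then `G'` has fewer than `3 ^ ((2t - x)/3)`
cliques; if `x ≥ (2 - 3/log₂ 3) t` then `G'` has fewer than `2 ^ t` cliques. -/
theorem cliqueCount_of_missing_matching {W : Type*} [Fintype W] (H : SimpleGraph W)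
    (hconn : H.Connected) (t : ℕ) (ht : Fintype.card W = t) (x : ℕ)
    (hx : Hᶜ.matchingNumber = x)
    {V : Type*} [Fintype V] (G' : SimpleGraph V) (hfree : ¬ H.IsMinor G')
    (hdeg : ∀ v : V, (G'ᶜ.neighborSet v).ncard ≤ 1) :
    ((x : ℝ) < (2 - 3 / Real.logb 2 3) * t →
        (G'.cliqueCount : ℝ) < 3 ^ (((2 * t - x : ℝ)) / 3)) ∧
    ((2 - 3 / Real.logb 2 3) * t ≤ (x : ℝ) →
        (G'.cliqueCount : ℝ) < 2 ^ t) := by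
  subst ht hx
  exact cliqueCount_of_missing_matching_general hfree hdeg
end

section
/- For every ε > 0 there exists t₀ such that the following holds for every integer t ≥ t₀: if H is a connected graph on t vertices with x the number of edges of a maximum matching in the complement of H, then for every integer n ≥ max(4t/3 − 2x/3, t) there exists a graph on n vertices with no H-minor having at least max(3^{(2t−x)/3}, 2^t) · 2^{−εt} · n cliques. -/
/-!
A connected minor lives in one component, so a disjoint union of copies of `K` is `H`-minor-free
as soon as `K` is. As `K` will have at most `2 * t` vertices, the union has at least of order
`n / t` times as many cliques as `K`, and `2 ^ (-(ε * t))` absorbs all losses polynomial in `t`.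

For the term `2 ^ t` take `K` complete on `t - 1` vertices. For the other term let `K` be the
complement of a perfect matching with `p` edges. If `H` is a minor of `K`, then a count of the
branch sets leaves at least `2 * t - 2 * p` singletons among them. These cover both ends of at
least `2 * t - 3 * p` of the `p` matching edges, and as such ends are not adjacent in `K`, the
complement of `H` has a matching of that size. So `3 * p < 2 * t - x` excludes `H`, while `K` has
`3 ^ p` cliques.
-/

section

open SimpleGraph

variable {V W ι : Type*}

section Minor

variable {U : Type*} {G : SimpleGraph V} {H : SimpleGraph W} {K : SimpleGraph U}

theorem reachable_of_mem_branchSets (hH : H.Preconnected) {f : W → Set V}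
    (hconn : ∀ w, (G.induce (f w)).Connected)
    (hadj : ∀ ⦃w₁ w₂⦄, H.Adj w₁ w₂ → ∃ v₁ ∈ f w₁, ∃ v₂ ∈ f w₂, G.Adj v₁ v₂)
    {w₁ w₂ : W} {v₁ v₂ : V} (h₁ : v₁ ∈ f w₁) (h₂ : v₂ ∈ f w₂) : G.Reachable v₁ v₂ := by
  have within : ∀ {w v v'}, v ∈ f w → v' ∈ f w → G.Reachable v v' := fun {w v v'} hv hv' =>
    ((hconn w).preconnected ⟨v, hv⟩ ⟨v', hv'⟩).map (Embedding.induce (f w)).toHom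
  obtain ⟨walk⟩ := hH w₁ w₂
  induction walk generalizing v₁ with
  | nil => exact within h₁ h₂
  | cons h _ ih =>
    obtain ⟨u, hu, u', hu', huu'⟩ := hadj h
    exact (within h₁ hu).trans (huu'.reachable.trans (ih hu' h₂))

theorem isMinor_of_hom_injective_on_components (hH : H.Preconnected) (g : G →g K)
    (hg : ∀ ⦃u v⦄, G.Reachable u v → g u = g v → u = v) (h : H.IsMinor G) : H.IsMinor K := by
  obtain ⟨f, hne, hconn, hdisj, hadj⟩ := h
  refine ⟨fun w => g '' f w, fun w => (hne w).image g, fun w => ?_, fun w₁ w₂ hw => ?_,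
    fun w₁ w₂ hw => ?_⟩
  · have : Nonempty (g '' f w) := ((hne w).image g).to_subtype
    exact ⟨(hconn w).preconnected.map
      (⟨fun v => ⟨g v, Set.mem_image_of_mem g v.2⟩, fun h => g.map_adj h⟩ :
        G.induce (f w) →g K.induce (g '' f w))
      (by rintro ⟨_, v, hv, rfl⟩; exact ⟨⟨v, hv⟩, rfl⟩)⟩
  · refine Set.disjoint_left.2 ?_
    rintro _ ⟨v₁, h₁, rfl⟩ ⟨v₂, h₂, heq⟩
    obtain rfl := hg (reachable_of_mem_branchSets hH hconn hadj h₂ h₁) heq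
    exact Set.disjoint_left.1 (hdisj hw) h₁ h₂
  · obtain ⟨v₁, h₁, v₂, h₂, hv⟩ := hadj hw
    exact ⟨g v₁, Set.mem_image_of_mem g h₁, g v₂, Set.mem_image_of_mem g h₂, g.map_adj hv⟩

theorem card_le_card_of_isMinor [Fintype V] [Fintype W] (h : H.IsMinor G) :
    Fintype.card W ≤ Fintype.card V := by
  obtain ⟨f, hne, -, hdisj, -⟩ := h
  choose e he using hne
  refine Fintype.card_le_of_injective e fun w₁ w₂ heq => ?_
  by_contra hw
  exact Set.disjoint_left.1 (hdisj hw) (he w₁) (heq ▸ he w₂)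

end Minor

section CliqueCount

theorem card_mul_cliqueCount_sub_one_le [Fintype ι] [Fintype V] {G : SimpleGraph V}
    {U : Type*} [Fintype U] {K : SimpleGraph U} (φ : ι → K.Copy G)
    (hφ : Pairwise fun i j => ∀ u v, φ i u ≠ φ j v) :
    Fintype.card ι * (K.cliqueCount - 1) ≤ G.cliqueCount := by
  classical
  have map_le (i : ι) : K.map (φ i).toEmbedding ≤ G :=
    (map_le_iff_le_comap _ _ _).2 fun _ _ h => (φ i).toHom.map_adj h
  let Clique := {s : Finset U // K.IsClique (s : Set U)}
  let emptyClique : Clique := ⟨∅, by simp⟩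
  let image : ι × {s : Clique // s ≠ emptyClique} → {s : Finset V // G.IsClique (s : Set V)} :=
    fun x => ⟨x.2.1.1.map (φ x.1).toEmbedding, x.2.1.2.finsetMap.mono (map_le x.1)⟩
  have image_injective : Function.Injective image := by
    rintro ⟨i, ⟨s, hs⟩, hs'⟩ ⟨j, ⟨t, ht⟩, ht'⟩ h
    replace h : s.map (φ i).toEmbedding = t.map (φ j).toEmbedding := congrArg Subtype.val h
    obtain ⟨u, hu⟩ : s.Nonempty := Finset.nonempty_iff_ne_empty.2 fun h => hs' (Subtype.ext h)
    obtain ⟨v, -, huv⟩ := Finset.mem_map.1 (h ▸ Finset.mem_map_of_mem (φ i).toEmbedding hu)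
    obtain rfl : i = j := by
      by_contra hij
      exact hφ hij u v huv.symm
    obtain rfl := Finset.map_injective _ h
    rfl
  have hcard : Fintype.card Clique = K.cliqueCount := Nat.card_eq_fintype_card.symm
  simpa [cliqueCount, Nat.card_prod, Set.card_ne_eq, hcard] using
    Nat.card_le_card_of_injective image image_injective

theorem add_one_pow_le_cliqueCount_completeEquipartiteGraph (r t : ℕ) :
    (t + 1) ^ r ≤ (completeEquipartiteGraph r t).cliqueCount := by
  classical
  let transversal (c : Fin r → Option (Fin t)) :
      {s : Finset (Fin r × Fin t) // (completeEquipartiteGraph r t).IsClique (s : Set _)} :=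
    ⟨({v | c v.1 = some v.2} : Finset (Fin r × Fin t)), by
      rintro ⟨i, a⟩ ha ⟨j, b⟩ hb hab
      simp only [Finset.coe_filter, Finset.mem_univ, true_and, Set.mem_ofPred_eq] at ha hb
      rw [completeEquipartiteGraph_adj]
      rintro rfl
      exact hab (by rw [Option.some_inj.1 (ha.symm.trans hb)])⟩
  have transversal_injective : Function.Injective transversal := by
    intro c d h
    funext i
    ext a
    simpa [transversal] using Finset.ext_iff.1 (congrArg Subtype.val h) (i, a)
  simpa [cliqueCount] using Nat.card_le_card_of_injective transversal transversal_injective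

end CliqueCount

section DisjointCopies

variable [Fintype V] [Nonempty V]

/-- Cuts `ℕ` into consecutive intervals of length `Fintype.card V`, each a copy of `V`. -/
noncomputable def natEquivNatProd (V : Type*) [Fintype V] [Nonempty V] : ℕ ≃ ℕ × V :=
  (Nat.divModEquiv (Fintype.card V)).trans
    ((Equiv.refl ℕ).prodCongr (Fintype.equivFin V).symm)

/-- The disjoint union of copies of `K` on `n` vertices, cut out of the union of infinitely many
copies, which is encoded as the box product with the edgeless graph on `ℕ`. When `Fintype.card V`
does not divide `n`, the last copy keeps only the remaining vertices. -/
noncomputable def disjointCopies (K : SimpleGraph V) (n : ℕ) : SimpleGraph (Fin n) :=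
  ((⊥ : SimpleGraph ℕ) □ K).comap fun v => natEquivNatProd V v

variable {K : SimpleGraph V} {n : ℕ}

theorem disjointCopies_adj {u v : Fin n} : (disjointCopies K n).Adj u v ↔
    (natEquivNatProd V u).1 = (natEquivNatProd V v).1 ∧
      K.Adj (natEquivNatProd V u).2 (natEquivNatProd V v).2 := by
  simp [disjointCopies, boxProd_adj, and_comm]

theorem isMinor_of_isMinor_disjointCopies {H : SimpleGraph W} (hH : H.Preconnected)
    (h : H.IsMinor (disjointCopies K n)) : H.IsMinor K := by
  let toK : disjointCopies K n →g K :=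
    ⟨fun v => (natEquivNatProd V v).2, fun h => (disjointCopies_adj.1 h).2⟩
  refine isMinor_of_hom_injective_on_components hH toK (fun u v huv heq => ?_) h
  have hfst : (natEquivNatProd V u).1 = (natEquivNatProd V v).1 :=
    reachable_bot.1 (reachable_boxProd.1 (huv.map (Hom.comap _ _))).1
  exact Fin.ext ((natEquivNatProd V).injective (Prod.ext hfst heq))

theorem natEquivNatProd_symm_lt (i : Fin (n / Fintype.card V)) (v : V) :
    (natEquivNatProd V).symm (i, v) < n := by
  have hlt : (natEquivNatProd V).symm (i, v) < (i + 1) * Fintype.card V := by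
    simp [natEquivNatProd, Nat.divModEquiv, add_mul]
  exact hlt.trans_le ((Nat.mul_le_mul_right _ i.2).trans (Nat.div_mul_le_self n _))

/-- The `i`-th of the complete copies of `K` in `disjointCopies K n`. -/
noncomputable def disjointCopies.copy (K : SimpleGraph V) (i : Fin (n / Fintype.card V)) :
    K.Copy (disjointCopies K n) where
  toHom := ⟨fun v => ⟨(natEquivNatProd V).symm (i, v), natEquivNatProd_symm_lt i v⟩,
    fun h => disjointCopies_adj.2 (by simpa using h)⟩
  injective' u v h := by simpa using h

theorem div_mul_cliqueCount_sub_one_le_cliqueCount_disjointCopies :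
    n / Fintype.card V * (K.cliqueCount - 1) ≤ (disjointCopies K n).cliqueCount := by
  simpa using card_mul_cliqueCount_sub_one_le (disjointCopies.copy (n := n) K)
    fun i j hij u v h => hij <| Fin.ext <|
      congrArg Prod.fst ((natEquivNatProd V).symm.injective (Fin.val_eq_of_eq h))

theorem mul_cliqueCount_sub_one_le_mul_cliqueCount_disjointCopies (hn : Fintype.card V ≤ n) :
    n * (K.cliqueCount - 1) ≤ 2 * Fintype.card V * (disjointCopies K n).cliqueCount := by
  have hpos : 0 < n / Fintype.card V := Nat.div_pos hn Fintype.card_pos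
  have hdiv : n ≤ 2 * Fintype.card V * (n / Fintype.card V) := by
    calc n ≤ Fintype.card V * (n / Fintype.card V + 1) :=
          (Nat.lt_mul_div_succ n Fintype.card_pos).le
      _ ≤ Fintype.card V * (2 * (n / Fintype.card V)) := by gcongr; omega
      _ = 2 * Fintype.card V * (n / Fintype.card V) := by ring
  calc n * (K.cliqueCount - 1)
      ≤ 2 * Fintype.card V * (n / Fintype.card V) * (K.cliqueCount - 1) := by gcongr
    _ = 2 * Fintype.card V * (n / Fintype.card V * (K.cliqueCount - 1)) := mul_assoc _ _ _
    _ ≤ 2 * Fintype.card V * (disjointCopies K n).cliqueCount := by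
      gcongr
      exact div_mul_cliqueCount_sub_one_le_cliqueCount_disjointCopies

end DisjointCopies

section Matching

theorem ncard_edgeSet_le_matchingNumber [Fintype V] {G : SimpleGraph V} {M : G.Subgraph}
    (hM : M.IsMatching) : M.edgeSet.ncard ≤ G.matchingNumber := by
  refine le_csSup ⟨Nat.card (Sym2 V), ?_⟩ ⟨M, hM, rfl⟩
  rintro _ ⟨M', -, rfl⟩
  exact Set.ncard_le_card _

theorem card_le_matchingNumber [Fintype V] [Fintype ι] {G : SimpleGraph V} {u v : ι → V}
    (hinj : Function.Injective (Sum.elim u v)) (hadj : ∀ i, G.Adj (u i) (v i)) :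
    Fintype.card ι ≤ G.matchingNumber := by
  have edge_injective : Function.Injective fun i => s(u i, v i) := by
    intro i j h
    rcases Sym2.eq_iff.1 h with ⟨huu, -⟩ | ⟨huv, -⟩
    · exact Sum.inl_injective (hinj huu)
    · cases hinj (a₁ := .inl i) (a₂ := .inr j) huv
  let M : G.Subgraph := ⨆ i, G.subgraphOfAdj (hadj i)
  have hM : M.IsMatching := by
    refine Subgraph.IsMatching.iSup (fun i => Subgraph.IsMatching.subgraphOfAdj (hadj i))
      fun i j hij => ?_
    have huu : u i ≠ u j := fun h => hij (Sum.inl_injective (hinj h))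
    have hvv : v i ≠ v j := fun h => hij (Sum.inr_injective (hinj h))
    have huv : ∀ k l, u k ≠ v l := fun k l h => Sum.inl_ne_inr (hinj h)
    simp [support_subgraphOfAdj, huu.symm, hvv.symm, huv, (huv _ _).symm]
  have hedges : M.edgeSet = Set.range fun i => s(u i, v i) := by
    simp [M, Subgraph.edgeSet_iSup, Set.range, eq_comm]
  calc Fintype.card ι = M.edgeSet.ncard := by
        rw [hedges, Set.ncard_range_of_injective edge_injective, Nat.card_eq_fintype_card]
    _ ≤ G.matchingNumber := ncard_edgeSet_le_matchingNumber hM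

theorem card_le_card_add_card_both_mem [Fintype ι] [DecidableEq ι] (T : Finset (ι × Fin 2)) :
    T.card ≤ Fintype.card ι + Fintype.card {i // (i, 0) ∈ T ∧ (i, 1) ∈ T} := by
  calc T.card = ∑ v, if v ∈ T then 1 else 0 := by simp
    _ = ∑ i, ((if (i, 0) ∈ T then 1 else 0) + if (i, 1) ∈ T then 1 else 0) := by
        simp only [Fintype.sum_prod_type, Fin.sum_univ_two]
    _ ≤ ∑ i, (1 + if (i, 0) ∈ T ∧ (i, 1) ∈ T then 1 else 0) := by
        refine Finset.sum_le_sum fun i _ => ?_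
        split_ifs <;> simp_all
    _ = Fintype.card ι + Fintype.card {i // (i, 0) ∈ T ∧ (i, 1) ∈ T} := by
        simp [Finset.sum_add_distrib, Fintype.card_subtype]

theorem sum_ncard_inter_le_ncard [Finite V] [Fintype W] {f : W → Set V}
    (hf : Pairwise fun w₁ w₂ => Disjoint (f w₁) (f w₂)) (T : Set V) :
    ∑ w, (f w ∩ T).ncard ≤ T.ncard := by
  calc ∑ w, (f w ∩ T).ncard = (⋃ w, f w ∩ T).ncard := by
        rw [Set.ncard_iUnion_of_finite (fun _ => Set.toFinite _)
          (hf.mono fun _ _ h => h.mono Set.inter_subset_left Set.inter_subset_left),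
          finsum_eq_sum_of_fintype]
    _ ≤ T.ncard := Set.ncard_le_ncard (Set.iUnion_subset fun _ => Set.inter_subset_right)

theorem two_mul_card_le_card_add_ncard_singletons [Fintype V] [Fintype W] {f : W → Set V}
    (hne : ∀ w, (f w).Nonempty) (hf : Pairwise fun w₁ w₂ => Disjoint (f w₁) (f w₂)) :
    2 * Fintype.card W ≤ Fintype.card V + {v | ∃ w, f w = {v}}.ncard := by
  set T : Set V := {v | ∃ w, f w = {v}}
  have two_le (w : W) : 2 ≤ (f w ∩ Set.univ).ncard + (f w ∩ T).ncard := by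
    rw [Set.inter_univ]
    rcases (hne w).exists_eq_singleton_or_nontrivial with ⟨v, hv⟩ | hw
    · have : v ∈ T := ⟨w, hv⟩
      simp [hv, this]
    · exact le_add_right (Set.one_lt_ncard_iff_nontrivial.2 hw)
  calc 2 * Fintype.card W = ∑ _w : W, 2 := by simp [mul_comm]
    _ ≤ ∑ w, ((f w ∩ Set.univ).ncard + (f w ∩ T).ncard) := Finset.sum_le_sum fun w _ => two_le w
    _ = ∑ w, (f w ∩ Set.univ).ncard + ∑ w, (f w ∩ T).ncard := Finset.sum_add_distrib
    _ ≤ (Set.univ : Set V).ncard + T.ncard :=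
        add_le_add (sum_ncard_inter_le_ncard hf _) (sum_ncard_inter_le_ncard hf _)
    _ = Fintype.card V + T.ncard := by rw [Set.ncard_univ, Nat.card_eq_fintype_card]

theorem two_mul_card_le_of_isMinor_completeEquipartiteGraph_two [Fintype W] {H : SimpleGraph W}
    {p : ℕ} (h : H.IsMinor (completeEquipartiteGraph p 2)) :
    2 * Fintype.card W ≤ 3 * p + Hᶜ.matchingNumber := by
  classical
  obtain ⟨f, hne, -, hdisj, hadj⟩ := h
  let T : Finset (Fin p × Fin 2) := {v | ∃ w, f w = {v}}
  have hsingle : 2 * Fintype.card W ≤ 2 * p + T.card := by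
    have := two_mul_card_le_card_add_ncard_singletons hne hdisj
    have hT : (T : Set (Fin p × Fin 2)) = {v | ∃ w, f w = {v}} := by simp [T]
    rw [← hT, Set.ncard_coe_finset] at this
    simpa [mul_comm] using this
  have hfull : T.card ≤ p + Fintype.card {i // (i, 0) ∈ T ∧ (i, 1) ∈ T} := by
    simpa using card_le_card_add_card_both_mem T
  have hmatching : Fintype.card {i // (i, 0) ∈ T ∧ (i, 1) ∈ T} ≤ Hᶜ.matchingNumber := by
    choose u hu using fun i : {i // (i, 0) ∈ T ∧ (i, 1) ∈ T} => (Finset.mem_filter_univ _).1 i.2.1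
    choose v hv using fun i : {i // (i, 0) ∈ T ∧ (i, 1) ∈ T} => (Finset.mem_filter_univ _).1 i.2.2
    have hinj : Function.Injective (Sum.elim u v) := by
      refine Function.Injective.of_comp (f := f) ?_
      rintro (i | i) (j | j) hij <;>
        simp only [Function.comp_apply, Sum.elim_inl, Sum.elim_inr, hu, hv,
          Set.singleton_eq_singleton_iff, Prod.mk.injEq, and_true, zero_ne_one, one_ne_zero,
          and_false] at hij
      · rw [Subtype.ext hij]
      · rw [Subtype.ext hij]
    refine card_le_matchingNumber hinj fun i => ?_
    refine (compl_adj _ _ _).2 ⟨fun h => Sum.inl_ne_inr (hinj h), fun h => ?_⟩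
    obtain ⟨a, ha, b, hb, hab⟩ := hadj h
    rw [hu, Set.mem_singleton_iff] at ha
    rw [hv, Set.mem_singleton_iff] at hb
    subst ha hb
    exact hab rfl
  omega

end Matching

section Bounds

variable {H : SimpleGraph W} {n : ℕ}

theorem exists_not_isMinor_of_not_isMinor_completeEquipartiteGraph (hH : H.Preconnected)
    {r t : ℕ} (hr : r ≠ 0) (ht : t ≠ 0) (hn : r * t ≤ n)
    (hminor : ¬ H.IsMinor (completeEquipartiteGraph r t)) :
    ∃ G : SimpleGraph (Fin n), ¬ H.IsMinor G ∧
      n * ((t + 1) ^ r - 1) ≤ 2 * (r * t) * G.cliqueCount := by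
  have : NeZero r := ⟨hr⟩
  have : NeZero t := ⟨ht⟩
  have hcard : Fintype.card (Fin r × Fin t) = r * t := by simp
  refine ⟨disjointCopies (completeEquipartiteGraph r t) n,
    fun h => hminor (isMinor_of_isMinor_disjointCopies hH h), ?_⟩
  calc n * ((t + 1) ^ r - 1)
      ≤ n * ((completeEquipartiteGraph r t).cliqueCount - 1) := by
        gcongr
        exact add_one_pow_le_cliqueCount_completeEquipartiteGraph r t
    _ ≤ 2 * (r * t) * (disjointCopies (completeEquipartiteGraph r t) n).cliqueCount :=
        hcard ▸ mul_cliqueCount_sub_one_le_mul_cliqueCount_disjointCopies (hcard.trans_le hn)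

variable [Fintype W]

theorem exists_not_isMinor_two_pow_mul_le_cliqueCount [Nontrivial W] (hH : H.Preconnected)
    (hn : Fintype.card W ≤ n) :
    ∃ G : SimpleGraph (Fin n), ¬ H.IsMinor G ∧
      2 ^ Fintype.card W * n ≤ 12 * Fintype.card W * G.cliqueCount := by
  obtain ⟨r, hr⟩ : ∃ r, Fintype.card W = r + 2 :=
    Nat.exists_eq_add_of_le' (Fintype.one_lt_card (α := W))
  have hminor : ¬ H.IsMinor (completeEquipartiteGraph (r + 1) 1) := fun h => by
    have : Fintype.card W ≤ r + 1 := by simpa using card_le_card_of_isMinor h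
    omega
  obtain ⟨G, hG, hcliques⟩ := exists_not_isMinor_of_not_isMinor_completeEquipartiteGraph hH
    r.succ_ne_zero one_ne_zero (by omega : (r + 1) * 1 ≤ n) hminor
  refine ⟨G, hG, ?_⟩
  have hpow : 2 ^ (r + 2) ≤ 4 * (2 ^ (r + 1) - 1) := by
    have := Nat.one_le_two_pow (n := r)
    simp only [pow_succ]
    omega
  rw [hr]
  calc 2 ^ (r + 2) * n ≤ 4 * (2 ^ (r + 1) - 1) * n := by gcongr
    _ = 4 * (n * (2 ^ (r + 1) - 1)) := by ring
    _ ≤ 4 * (2 * ((r + 1) * 1) * G.cliqueCount) := by gcongr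
    _ = 8 * (r + 1) * G.cliqueCount := by ring
    _ ≤ 12 * (r + 2) * G.cliqueCount := by gcongr <;> omega

theorem exists_not_isMinor_three_pow_mul_le_cliqueCount (hH : H.Preconnected) {p : ℕ} (hp : p ≠ 0)
    (hcard : 3 * p + Hᶜ.matchingNumber < 2 * Fintype.card W) (hn : 2 * p ≤ n) :
    ∃ G : SimpleGraph (Fin n), ¬ H.IsMinor G ∧
      3 ^ (p + 1) * n ≤ 12 * Fintype.card W * G.cliqueCount := by
  have hminor : ¬ H.IsMinor (completeEquipartiteGraph p 2) := fun h =>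
    hcard.not_ge (two_mul_card_le_of_isMinor_completeEquipartiteGraph_two h)
  obtain ⟨G, hG, hcliques⟩ := exists_not_isMinor_of_not_isMinor_completeEquipartiteGraph hH
    hp two_ne_zero (by omega : p * 2 ≤ n) hminor
  refine ⟨G, hG, ?_⟩
  have hpow : 2 * 3 ^ (p + 1) ≤ 9 * (3 ^ p - 1) := by
    have := Nat.le_self_pow hp 3
    omega
  have : 2 * (3 ^ (p + 1) * n) ≤ 2 * (12 * Fintype.card W * G.cliqueCount) :=
    calc 2 * (3 ^ (p + 1) * n) = 2 * 3 ^ (p + 1) * n := by ring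
      _ ≤ 9 * (3 ^ p - 1) * n := by gcongr
      _ = 9 * (n * (3 ^ p - 1)) := by ring
      _ ≤ 9 * (2 * (p * 2) * G.cliqueCount) := by gcongr
      _ = 12 * (3 * p) * G.cliqueCount := by ring
      _ ≤ 12 * (2 * Fintype.card W) * G.cliqueCount := by gcongr 12 * ?_ * _; omega
      _ = 2 * (12 * Fintype.card W * G.cliqueCount) := by ring
  omega

theorem exists_not_isMinor_three_rpow_mul_le_cliqueCount (hH : H.Preconnected)
    (hcard : 3 + Hᶜ.matchingNumber < 2 * Fintype.card W)
    (hn : (4 * Fintype.card W - 2 * Hᶜ.matchingNumber : ℝ) / 3 ≤ n) :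
    ∃ G : SimpleGraph (Fin n), ¬ H.IsMinor G ∧
      (3 : ℝ) ^ ((2 * Fintype.card W - Hᶜ.matchingNumber : ℝ) / 3) * n ≤
        12 * Fintype.card W * G.cliqueCount := by
  obtain ⟨p, hp, hlt, hle⟩ : ∃ p, p ≠ 0 ∧ 3 * p + Hᶜ.matchingNumber < 2 * Fintype.card W ∧
      2 * Fintype.card W ≤ 3 * (p + 1) + Hᶜ.matchingNumber :=
    ⟨(2 * Fintype.card W - Hᶜ.matchingNumber - 1) / 3, by omega, by omega, by omega⟩
  have hpn : 2 * p ≤ n := by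
    have hlt' : (3 * p + Hᶜ.matchingNumber : ℝ) < 2 * Fintype.card W := mod_cast hlt
    have : (2 * p : ℝ) ≤ n := by linarith
    exact_mod_cast this
  obtain ⟨G, hG, hcliques⟩ := exists_not_isMinor_three_pow_mul_le_cliqueCount hH hp hlt hpn
  refine ⟨G, hG, ?_⟩
  have hexp : (2 * Fintype.card W - Hᶜ.matchingNumber : ℝ) / 3 ≤ (p + 1 : ℕ) := by
    have hle' : (2 * Fintype.card W : ℝ) ≤ 3 * (p + 1) + Hᶜ.matchingNumber := mod_cast hle
    push_cast
    linarith
  calc (3 : ℝ) ^ ((2 * Fintype.card W - Hᶜ.matchingNumber : ℝ) / 3) * n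
      ≤ (3 : ℝ) ^ ((p + 1 : ℕ) : ℝ) * n := by gcongr; norm_num
    _ = (3 : ℝ) ^ (p + 1) * n := by rw [Real.rpow_natCast]
    _ ≤ 12 * Fintype.card W * G.cliqueCount := mod_cast hcliques

theorem exists_graph_no_minor_many_cliques_general [Nontrivial W] (hH : H.Preconnected)
    (hn : max ((4 * Fintype.card W - 2 * Hᶜ.matchingNumber : ℝ) / 3) (Fintype.card W : ℝ) ≤ n) :
    ∃ G : SimpleGraph (Fin n), ¬ H.IsMinor G ∧
      max ((3 : ℝ) ^ ((2 * Fintype.card W - Hᶜ.matchingNumber : ℝ) / 3)) (2 ^ Fintype.card W) * n ≤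
        12 * Fintype.card W * G.cliqueCount := by
  obtain ⟨hn_matching, hn_card⟩ := max_le_iff.1 hn
  rcases le_or_gt ((3 : ℝ) ^ ((2 * Fintype.card W - Hᶜ.matchingNumber : ℝ) / 3))
    (2 ^ Fintype.card W) with hle | hlt
  · rw [max_eq_right hle]
    exact_mod_cast exists_not_isMinor_two_pow_mul_le_cliqueCount hH (Nat.cast_le.1 hn_card)
  · rw [max_eq_left hlt.le]
    refine exists_not_isMinor_three_rpow_mul_le_cliqueCount hH ?_ hn_matching
    have hpow : (2 : ℝ) ^ 2 ≤ 2 ^ Fintype.card W :=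
      pow_le_pow_right₀ one_le_two Fintype.one_lt_card
    have hexp : 1 < (2 * Fintype.card W - Hᶜ.matchingNumber : ℝ) / 3 := by
      rw [← Real.rpow_lt_rpow_left_iff (x := 3) (by norm_num), Real.rpow_one]
      linarith
    have : (3 + Hᶜ.matchingNumber : ℝ) < 2 * Fintype.card W := by linarith
    exact_mod_cast this

end Bounds

theorem exists_forall_mul_two_rpow_neg_le_one {ε : ℝ} (hε : 0 < ε) (c : ℝ) :
    ∃ t₀ : ℕ, ∀ t : ℕ, t₀ ≤ t → c * t * 2 ^ (-(ε * t)) ≤ 1 := by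
  have hlim : Filter.Tendsto (fun t : ℕ => c * (t * ((2 : ℝ) ^ (-ε)) ^ t))
      Filter.atTop (nhds 0) := by
    simpa using (tendsto_self_mul_const_pow_of_lt_one (by positivity)
      (Real.rpow_lt_one_of_one_lt_of_neg one_lt_two (neg_lt_zero.2 hε))).const_mul c
  obtain ⟨t₀, ht₀⟩ := Filter.eventually_atTop.1 (hlim.eventually_le_const zero_lt_one)
  refine ⟨t₀, fun t ht => ?_⟩
  rw [← neg_mul, Real.rpow_mul_natCast zero_le_two, mul_assoc]
  exact ht₀ t ht

end

/-- For sufficiently large `t`: if `H` is connected on `t` vertices and `x` is the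
maximum matching size in the complement of `H`, then for every `n ≥ max (4t/3 - 2x/3) t`
there is an `H`-minor-free graph on `n` vertices with at least
`max (3 ^ ((2t - x)/3)) (2 ^ t) * 2 ^ (-εt) * n` cliques. -/
theorem exists_graph_no_minor_many_cliques (ε : ℝ) (hε : 0 < ε) :
    ∃ t₀ : ℕ, ∀ t : ℕ, t₀ ≤ t →
      ∀ (W : Type) [Fintype W], ∀ H : SimpleGraph W, H.Connected → Fintype.card W = t →
        ∀ x : ℕ, Hᶜ.matchingNumber = x →
          ∀ n : ℕ, max ((4 * t - 2 * x : ℝ) / 3) (t : ℝ) ≤ (n : ℝ) →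
            ∃ G : SimpleGraph (Fin n), ¬ H.IsMinor G ∧
              max ((3 : ℝ) ^ (((2 * t - x : ℝ)) / 3)) (2 ^ t) * 2 ^ (-(ε * t)) *
                  (n : ℝ) ≤ (G.cliqueCount : ℝ) := by
  obtain ⟨t₀, ht₀⟩ := exists_forall_mul_two_rpow_neg_le_one hε 12
  refine ⟨max t₀ 2, ?_⟩
  rintro t ht W _ H hH rfl x rfl n hn
  have : Nontrivial W := Fintype.one_lt_card_iff_nontrivial.1 ((le_max_right _ _).trans ht)
  obtain ⟨G, hG, hcliques⟩ := exists_graph_no_minor_many_cliques_general hH.preconnected hn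
  refine ⟨G, hG, ?_⟩
  rw [mul_right_comm]
  calc _ ≤ 12 * Fintype.card W * G.cliqueCount * (2 : ℝ) ^ (-(ε * Fintype.card W)) := by gcongr
    _ = 12 * Fintype.card W * 2 ^ (-(ε * Fintype.card W)) * G.cliqueCount := mul_right_comm _ _ _
    _ ≤ G.cliqueCount :=
      mul_le_of_le_one_left (Nat.cast_nonneg _) (ht₀ _ ((le_max_left _ _).trans ht))
end

section
/- Let α* = (2−√2)/2 − 0.001. For every integer d ≥ 2, there do not exist nonnegative real numbers β₀, β₁, …, β_d with β₀ + β₁ + ⋯ + β_d = 1, Σ_{i=0}^{d} β_i/2^i ≥ 2α*, and (1/d)·Σ_{i=1}^{d} i·β_i ≥ 2α*. -/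
/-!
For `d ≥ 2`, all points `(2⁻ⁱ, i / d)` with `0 ≤ i ≤ d` lie on or below the line
`x + (3 / 4) y = 1`, which for `d = 2` joins the two extreme points `i = 0` and `i = d`. Hence so do
their convex combinations, and both coordinates of such a combination can be at least `2α` only if
`(7 / 4) * 2α ≤ 1`, that is, `α ≤ 2 / 7`.
-/

section WeightedPoints

variable {K : Type*} [Field K] [LinearOrder K] [IsStrictOrderedRing K]

theorem one_div_two_pow_add_three_quarters_mul_div_le_one {d : K} {i : ℕ} (hd : 2 ≤ d)
    (hi : (i : K) ≤ d) : 1 / 2 ^ i + 3 / 4 * (i / d) ≤ 1 := by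
  have hd_pos : 0 < d := by linarith
  rcases Nat.lt_or_ge i 2 with hi_lt | hi_ge
  · interval_cases i
    · simp
    · have inv_le_half : 1 / d ≤ 1 / 2 := one_div_le_one_div_of_le two_pos hd
      norm_num at inv_le_half ⊢
      linarith
  · have pow_le_quarter : (1 : K) / 2 ^ i ≤ 1 / 2 ^ 2 :=
      one_div_pow_le_one_div_pow_of_le one_le_two hi_ge
    have ratio_le_one : i / d ≤ 1 := (div_le_one hd_pos).2 hi
    linarith

theorem sum_div_two_pow_add_three_quarters_mul_le_sum {d : K} {s : Finset ℕ} {β : ℕ → K}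
    (hd : 2 ≤ d) (hs : ∀ i ∈ s, (i : K) ≤ d) (hβ : ∀ i ∈ s, 0 ≤ β i) :
    ∑ i ∈ s, β i / 2 ^ i + 3 / 4 * (1 / d * ∑ i ∈ s, (i : K) * β i) ≤ ∑ i ∈ s, β i := by
  calc
    _ = ∑ i ∈ s, β i * (1 / 2 ^ i + 3 / 4 * (i / d)) := by
      simp only [Finset.mul_sum, ← Finset.sum_add_distrib]
      exact Finset.sum_congr rfl fun i _ ↦ by ring
    _ ≤ ∑ i ∈ s, β i := Finset.sum_le_sum fun i hi ↦
      mul_le_of_le_one_right (hβ i hi)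
        (one_div_two_pow_add_three_quarters_mul_div_le_one hd (hs i hi))

theorem lp_infeasible_general {α : K} (hα : 2 / 7 < α) {d : ℕ} (hd : 2 ≤ d) :
    ¬ ∃ β : ℕ → K,
        (∀ i ∈ Finset.range (d + 1), 0 ≤ β i) ∧
        (∑ i ∈ Finset.range (d + 1), β i) = 1 ∧
        2 * α ≤ ∑ i ∈ Finset.range (d + 1), β i / 2 ^ i ∧
        2 * α ≤ (1 / d) * ∑ i ∈ Finset.range (d + 1), (i : K) * β i := by
  rintro ⟨β, β_nonneg, β_sum, hpow, hmean⟩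
  have index_le : ∀ i ∈ Finset.range (d + 1), (i : K) ≤ d := fun i hi ↦
    Nat.cast_le.2 (Finset.mem_range_succ_iff.1 hi)
  have combined :=
    sum_div_two_pow_add_three_quarters_mul_le_sum (Nat.ofNat_le_cast.2 hd) index_le β_nonneg
  linarith

end WeightedPoints

theorem two_sevenths_lt_alphaStar : 2 / 7 < alphaStar := by
  have sqrt_two_lt : Real.sqrt 2 < 1.42 := (Real.sqrt_lt' (by norm_num)).2 (by norm_num)
  norm_num [alphaStar] at sqrt_two_lt ⊢
  linarith

/-- For `d ≥ 2` there are no nonnegative reals `β₀, …, β_d` summing to `1` with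
`Σ β_i / 2^i ≥ 2α*` and `(1/d) Σ i β_i ≥ 2α*`. -/
theorem lp_infeasible (d : ℕ) (hd : 2 ≤ d) :
    ¬ ∃ β : ℕ → ℝ,
        (∀ i ∈ Finset.range (d + 1), 0 ≤ β i) ∧
        (∑ i ∈ Finset.range (d + 1), β i) = 1 ∧
        2 * alphaStar ≤ ∑ i ∈ Finset.range (d + 1), β i / 2 ^ i ∧
        2 * alphaStar ≤ (1 / d) * ∑ i ∈ Finset.range (d + 1), (i : ℝ) * β i :=
  lp_infeasible_general two_sevenths_lt_alphaStar hd
end
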